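/- Let U ⊂ ℝ^{d-1} be open and γ : U → ℝ be real-analytic. Suppose γ(y₀) = 0 and ∇γ(y₀) = 0 at some point y₀ ∈ U. Then there exist a neighborhood V of y₀ and constants C₁, C₂ > 0 such that |γ(y)| ≤ C₁ |∇γ(y)| and |∇γ(y)| ≤ C₂ |D²γ(y)| for all y ∈ V; in particular |γ(y)| ≤ C₁C₂ |D²γ(y)| on V. -/

import Mathlib

/-!
It is enough that `f = o(∇f)` at a zero of an analytic `f`; this is applied to `γ` and to `∇γ`, and
it may be tested along ultrafilters converging to the point.

If `f ∘ ψ` is a monomial times a unit and `v i` divides the monomial, then `f ∘ ψ` is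
`O(v i * ∂ᵢ(f ∘ ψ))`, where `v i * ∂ᵢ(f ∘ ψ)` is the derivative of `f` along a vector tending to
`0`, hence is `o(∇f ∘ ψ)`.

Such a `ψ`, through whose image the ultrafilter factors, comes from local uniformization with the
ultrafilter in the role of a valuation, by induction on the dimension and on the order `d` of `f` in
one variable `x`. A Tschirnhausen shift removes the term of degree `d - 1` in `x`. By the induction
on the dimension the other coefficients become `μ ^ (d - i)` times functions that do not all vanish
at `0`, with `μ` a monomial. If `x / μ` converges to some `c`, the substitution `x = μ * (c + y)`
lowers the order, since a polynomial of degree `d` without term of degree `d - 1` is a multiple of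
`(x - c) ^ d` only if it is a multiple of `x ^ d`. Otherwise `μ / x` tends to `0`, blow-ups make `x`
divide `μ`, and `f` becomes `x ^ d` times a unit.
-/

open MeasureTheory Set
open scoped Topology

namespace Lojasiewicz

open Filter Asymptotics

attribute [local fun_prop] analyticAt_fst analyticAt_snd

section Division

variable {𝕜 V F : Type*} [NontriviallyNormedField 𝕜] [NormedAddCommGroup V] [NormedSpace 𝕜 V]
  [NormedAddCommGroup F] [NormedSpace 𝕜 F]

/-- The map `v ↦ v - ℓ v • e`; it is the projection onto `ker ℓ` along `e` when `ℓ e = 1`. -/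
def projAlong (ℓ : V →L[𝕜] 𝕜) (e : V) : V →L[𝕜] V :=
  ContinuousLinearMap.id 𝕜 V - ℓ.smulRight e

@[simp] lemma projAlong_apply (ℓ : V →L[𝕜] 𝕜) (e v : V) : projAlong ℓ e v = v - ℓ v • e := by
  simp [projAlong]

/-- The `j`-th summand of the `m`-th coefficient of the power series of
`(f v - f (v - ℓ v • e)) / ℓ v`, where `p` is the power series of `f`: the vector `e` goes into the
`j`-th slot of `p (m + 1)`, projected copies of `v` before it and plain copies after it. -/
noncomputable def dividedTerm (ℓ : V →L[𝕜] 𝕜) (e : V) (p : FormalMultilinearSeries 𝕜 V F) (m : ℕ)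
    (j : Fin (m + 1)) : ContinuousMultilinearMap 𝕜 (fun _ : Fin m => V) F :=
  ((p (m + 1)).curryMid j e).compContinuousLinearMap
    fun i => if i.castSucc < j then projAlong ℓ e else ContinuousLinearMap.id 𝕜 V

/-- The power series of `(f v - f (v - ℓ v • e)) / ℓ v`, where `p` is the power series of `f`. -/
noncomputable def dividedSeries (ℓ : V →L[𝕜] 𝕜) (e : V) (p : FormalMultilinearSeries 𝕜 V F) :
    FormalMultilinearSeries 𝕜 V F :=
  fun m => ∑ j : Fin (m + 1), dividedTerm ℓ e p m j

lemma norm_dividedTerm_le (ℓ : V →L[𝕜] 𝕜) (e : V) (p : FormalMultilinearSeries 𝕜 V F) (m : ℕ)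
    (j : Fin (m + 1)) :
    ‖dividedTerm ℓ e p m j‖ ≤ ‖p (m + 1)‖ * ‖e‖ * max 1 ‖projAlong ℓ e‖ ^ m := by
  refine (ContinuousMultilinearMap.norm_compContinuousLinearMap_le _ _).trans ?_
  have curry_le : ‖(p (m + 1)).curryMid j e‖ ≤ ‖p (m + 1)‖ * ‖e‖ := by
    simpa using ((p (m + 1)).curryMid j).le_opNorm e
  have prod_le : ∏ i : Fin m, ‖if i.castSucc < j then projAlong ℓ e else .id 𝕜 V‖
      ≤ max 1 ‖projAlong ℓ e‖ ^ m := by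
    refine (Finset.prod_le_prod (g := fun _ => max 1 ‖projAlong ℓ e‖)
      (fun i _ => norm_nonneg _) fun i _ => ?_).trans_eq (by simp)
    split_ifs
    · exact le_max_right _ _
    · exact ContinuousLinearMap.norm_id_le.trans (le_max_left _ _)
  gcongr

lemma dividedSeries_radius_pos (ℓ : V →L[𝕜] 𝕜) (e : V) {p : FormalMultilinearSeries 𝕜 V F}
    (hp : 0 < p.radius) : 0 < (dividedSeries ℓ e p).radius := by
  obtain ⟨C, r, -, hr, hC⟩ := p.le_mul_pow_of_radius_pos hp
  set c := max 1 ‖projAlong ℓ e‖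
  have hc : 0 < c := zero_lt_one.trans_le (le_max_left _ _)
  have hρ : 0 < (2 * r * c)⁻¹ := by positivity
  have bound (m : ℕ) : ‖dividedSeries ℓ e p m‖ * ((2 * r * c)⁻¹.toNNReal : ℝ) ^ m
      ≤ C * r * ‖e‖ := by
    have card_le : (m : ℝ) + 1 ≤ 2 ^ m := by exact_mod_cast m.lt_two_pow_self
    calc ‖dividedSeries ℓ e p m‖ * ((2 * r * c)⁻¹.toNNReal : ℝ) ^ m
        ≤ (∑ _j : Fin (m + 1), ‖p (m + 1)‖ * ‖e‖ * c ^ m) * (2 * r * c)⁻¹ ^ m := by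
          rw [Real.coe_toNNReal _ hρ.le]
          gcongr
          exact norm_sum_le_of_le _ fun j _ => norm_dividedTerm_le ℓ e p m j
      _ = (m + 1) * (‖p (m + 1)‖ * ‖e‖ * c ^ m) * (2 * r * c)⁻¹ ^ m := by simp
      _ ≤ 2 ^ m * (C * r ^ (m + 1) * ‖e‖ * c ^ m) * (2 * r * c)⁻¹ ^ m := by
          gcongr
          exact hC _
      _ = C * r * ‖e‖ := by
          rw [inv_pow, mul_pow, mul_pow, pow_succ]
          field_simp
  exact lt_of_lt_of_le (by simpa using hρ)
    ((dividedSeries ℓ e p).le_radius_of_bound (C * r * ‖e‖) bound)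

lemma dividedTerm_apply (ℓ : V →L[𝕜] 𝕜) (e : V) (p : FormalMultilinearSeries 𝕜 V F) (m : ℕ)
    (j : Fin (m + 1)) (v : V) :
    ℓ v • dividedTerm ℓ e p m j (fun _ => v) =
      p (m + 1) (fun i => if (i : ℕ) < j then projAlong ℓ e v else v)
        - p (m + 1) (fun i => if (i : ℕ) < j + 1 then projAlong ℓ e v else v) := by
  set w : Fin (m + 1) → V := fun i => if (i : ℕ) < j then projAlong ℓ e v else v with hw
  have plain : w = Function.update w j v := (Function.update_eq_self_iff.2 (by simp [hw])).symm
  have projected : (fun i : Fin (m + 1) => if (i : ℕ) < j + 1 then projAlong ℓ e v else v)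
      = Function.update w j (projAlong ℓ e v) := by
    refine Function.eq_update_iff.2 ⟨by simp, fun i hij => ?_⟩
    have : (i : ℕ) ≠ j := Fin.val_ne_of_ne hij
    simp only [hw, show (i : ℕ) < j + 1 ↔ (i : ℕ) < j by omega]
  have term : dividedTerm ℓ e p m j (fun _ => v) = p (m + 1) (Function.update w j e) := by
    simp only [dividedTerm, ContinuousMultilinearMap.compContinuousLinearMap_apply,
      ContinuousMultilinearMap.curryMid_apply]
    congr 1
    refine Function.eq_update_iff.2 ⟨by simp, fun i hij => ?_⟩
    obtain ⟨k, rfl⟩ := Fin.exists_succAbove_eq hij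
    have : (j.succAbove k : ℕ) < j ↔ k.castSucc < j := by
      rw [← Fin.lt_def, Fin.succAbove_lt_iff_castSucc_lt]
    by_cases hk : k.castSucc < j <;> simp only [Fin.insertNth_apply_succAbove, hw, this, hk] <;> rfl
  rw [term, projected]
  nth_rewrite 2 [plain]
  rw [← ContinuousMultilinearMap.map_update_sub, ← ContinuousMultilinearMap.map_update_smul]
  simp

lemma dividedSeries_apply (ℓ : V →L[𝕜] 𝕜) (e : V) (p : FormalMultilinearSeries 𝕜 V F) (m : ℕ)
    (v : V) :
    ℓ v • dividedSeries ℓ e p m (fun _ => v) =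
      p (m + 1) (fun _ => v) - p (m + 1) (fun _ => projAlong ℓ e v) := by
  simp only [dividedSeries, sum_apply, Finset.smul_sum, dividedTerm_apply]
  rw [Fin.sum_univ_eq_sum_range fun j =>
    p (m + 1) (fun i => if (i : ℕ) < j then projAlong ℓ e v else v)
      - p (m + 1) (fun i => if (i : ℕ) < j + 1 then projAlong ℓ e v else v), Finset.sum_range_sub']
  simp only [Nat.not_lt_zero, if_false, Fin.is_lt, if_true]

theorem exists_analyticAt_eq_add_smul [CompleteSpace F] (ℓ : V →L[𝕜] 𝕜) (e : V) {f : V → F}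
    (hf : AnalyticAt 𝕜 f 0) :
    ∃ g : V → F, AnalyticAt 𝕜 g 0 ∧ ∀ᶠ v in 𝓝 0, f v = f (v - ℓ v • e) + ℓ v • g v := by
  obtain ⟨p, hp⟩ := hf
  have hq := ((dividedSeries ℓ e p).hasFPowerSeriesOnBall
    (dividedSeries_radius_pos ℓ e hp.radius_pos)).hasFPowerSeriesAt
  refine ⟨_, hq.analyticAt, ?_⟩
  have proj_tendsto : Tendsto (projAlong ℓ e) (𝓝 0) (𝓝 0) :=
    (projAlong ℓ e).continuous.tendsto' 0 0 (map_zero _)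
  filter_upwards [hp.eventually_hasSum, proj_tendsto.eventually hp.eventually_hasSum,
    hq.eventually_hasSum] with v sum_f sum_proj sum_quot
  rw [zero_add] at sum_f sum_proj sum_quot
  have sum_smul := sum_quot.const_smul (ℓ v)
  simp only [dividedSeries_apply] at sum_smul
  have sum_diff := sum_f.sub sum_proj
  rw [← hasSum_nat_add_iff' 1] at sum_diff
  have const_eq : p 0 (fun _ => v) = p 0 (fun _ => projAlong ℓ e v) :=
    congrArg _ (Subsingleton.elim _ _)
  have key := sum_smul.unique sum_diff
  simp only [Finset.sum_range_one, const_eq, sub_self, sub_zero, projAlong_apply] at key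
  rw [key, add_sub_cancel]

end Division

section Tschirnhausen

variable {W : Type*} [NormedAddCommGroup W] [NormedSpace ℝ W]

lemma exists_taylor_fst {f : ℝ × W → ℝ} (hf : AnalyticAt ℝ f 0) (d : ℕ) :
    ∃ (a : ℕ → W → ℝ) (u : ℝ × W → ℝ), (∀ i, AnalyticAt ℝ (a i) 0) ∧ AnalyticAt ℝ u 0 ∧
      ∀ᶠ p in 𝓝 0, f p = ∑ i ∈ Finset.range d, a i p.2 * p.1 ^ i + p.1 ^ d * u p := by
  induction d with
  | zero => exact ⟨fun _ _ => 0, f, fun _ => analyticAt_const, hf, by simp⟩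
  | succ d ih =>
    obtain ⟨a, u, ha, hu, hfu⟩ := ih
    obtain ⟨g, hg, hug⟩ :=
      exists_analyticAt_eq_add_smul (ContinuousLinearMap.fst ℝ ℝ W) ((1, 0) : ℝ × W) hu
    refine ⟨fun i => if i = d then fun t => u (0, t) else a i, g, fun i => ?_, hg, ?_⟩
    · dsimp only
      split_ifs
      · exact AnalyticAt.fun_comp_of_eq hu (by fun_prop) rfl
      · exact ha i
    · filter_upwards [hfu, hug] with p hp hp'
      have sub_eq : p - p.1 • ((1, 0) : ℝ × W) = (0, p.2) := by ext <;> simp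
      have sum_eq : ∑ i ∈ Finset.range d, (if i = d then fun t => u (0, t) else a i) p.2 * p.1 ^ i
          = ∑ i ∈ Finset.range d, a i p.2 * p.1 ^ i :=
        Finset.sum_congr rfl fun i hi => by rw [if_neg (Finset.mem_range.1 hi).ne]
      rw [hp, hp', Finset.sum_range_succ, sum_eq, if_pos rfl]
      simp only [ContinuousLinearMap.coe_fst', sub_eq, smul_eq_mul]
      ring

lemma iteratedDeriv_eq_of_taylor {g u : ℝ → ℝ} {d : ℕ} {c : ℕ → ℝ} (hu : AnalyticAt ℝ u 0)
    (hg : ∀ᶠ x in 𝓝 0, g x = ∑ i ∈ Finset.range d, c i * x ^ i + x ^ d * u x) {k : ℕ}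
    (hk : k < d) : iteratedDeriv k g 0 = k.factorial * c k := by
  have rem_analytic : AnalyticAt ℝ (fun x : ℝ => x ^ d * u x) 0 := by fun_prop
  have rem_zero : iteratedDeriv k (fun x : ℝ => x ^ d * u x) 0 = 0 :=
    (natCast_le_analyticOrderAt_iff_iteratedDeriv_eq_zero rem_analytic).1
      ((natCast_le_analyticOrderAt rem_analytic).2 ⟨u, hu, by simp⟩) k hk
  have poly_contDiff : ContDiff ℝ k fun x : ℝ => ∑ i ∈ Finset.range d, c i * x ^ i := by fun_prop
  rw [EventuallyEq.iteratedDeriv_eq k hg,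
    iteratedDeriv_fun_add poly_contDiff.contDiffAt rem_analytic.contDiffAt, rem_zero, add_zero,
    iteratedDeriv_fun_sum fun i _ => by fun_prop]
  simp only [iteratedDeriv_const_mul_field, iteratedDeriv_fun_pow_zero]
  simp [Finset.sum_ite_eq_of_mem _ _ _ (Finset.mem_range.mpr hk), mul_comm]

lemma taylor_coeff_of_order_eq {g u : ℝ → ℝ} {d : ℕ} {c : ℕ → ℝ} (hu : AnalyticAt ℝ u 0)
    (hg : ∀ᶠ x in 𝓝 0, g x = ∑ i ∈ Finset.range d, c i * x ^ i + x ^ d * u x)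
    (order : analyticOrderAt g 0 = d) : (∀ i < d, c i = 0) ∧ u 0 ≠ 0 := by
  have g_analytic : AnalyticAt ℝ g 0 := by
    refine AnalyticAt.congr ?_ (EventuallyEq.symm hg)
    have := Finset.analyticAt_fun_sum (𝕜 := ℝ) (c := (0 : ℝ)) (f := fun i (x : ℝ) => c i * x ^ i)
      (Finset.range d) fun i _ => by fun_prop
    fun_prop
  have coeff_zero : ∀ i < d, c i = 0 := fun i hi => by
    have deriv_zero :=
      (natCast_le_analyticOrderAt_iff_iteratedDeriv_eq_zero g_analytic).1 order.ge i hi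
    rw [iteratedDeriv_eq_of_taylor hu hg hi] at deriv_zero
    exact (mul_eq_zero.1 deriv_zero).resolve_left (by positivity)
  have g_eq : g =ᶠ[𝓝 0] id ^ d * u := by
    filter_upwards [hg] with x hx
    have sum_zero : ∑ i ∈ Finset.range d, c i * x ^ i = 0 :=
      Finset.sum_eq_zero fun i hi => by rw [coeff_zero i (Finset.mem_range.1 hi), zero_mul]
    simp [hx, sum_zero]
  rw [analyticOrderAt_congr g_eq, analyticOrderAt_mul (analyticAt_id.pow d) hu,
    analyticOrderAt_pow analyticAt_id, analyticOrderAt_id, nsmul_one] at order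
  exact ⟨coeff_zero, hu.analyticOrderAt_eq_zero.1
    (by simpa using order.trans (add_zero _).symm)⟩

lemma analyticAt_iteratedDeriv_fst {f : ℝ × W → ℝ} {p₀ : ℝ × W} (hf : AnalyticAt ℝ f p₀) (k : ℕ) :
    AnalyticAt ℝ (fun p : ℝ × W => iteratedDeriv k (fun x => f (x, p.2)) p.1) p₀ := by
  induction k with
  | zero => simpa using hf
  | succ k ih =>
    refine (((ContinuousLinearMap.apply ℝ ℝ ((1, 0) : ℝ × W)).analyticAt _).comp ih.fderiv).congr ?_
    filter_upwards [ih.eventually_analyticAt] with p hp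
    have line : HasDerivAt (fun x : ℝ => (x, p.2)) ((1, 0) : ℝ × W) p.1 :=
      (hasDerivAt_id p.1).prodMk (hasDerivAt_const p.1 p.2)
    rw [iteratedDeriv_succ]
    exact (hp.differentiableAt.hasFDerivAt.comp_hasDerivAt p.1 line).deriv.symm

lemma exists_analytic_implicit_fst [CompleteSpace W] {f : ℝ × W → ℝ} (hf : AnalyticAt ℝ f 0)
    (f_zero : f 0 = 0) (deriv_ne : deriv (fun x => f (x, 0)) 0 ≠ 0) :
    ∃ h : W → ℝ, AnalyticAt ℝ h 0 ∧ h 0 = 0 ∧ ∀ᶠ t in 𝓝 0, f (h t, t) = 0 := by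
  have swap_analytic : AnalyticAt ℝ (fun q : W × ℝ => f (q.2, q.1)) 0 :=
    AnalyticAt.fun_comp_of_eq hf (by fun_prop) rfl
  have swap_contDiff := swap_analytic.contDiffAt (n := ⊤)
  have invertible :
      (fderiv ℝ (fun q : W × ℝ => f (q.2, q.1)) 0 ∘L .inr ℝ W ℝ).IsInvertible := by
    refine ⟨ContinuousLinearEquiv.smulLeft (Units.mk0 _ deriv_ne), ?_⟩
    ext
    have line : HasDerivAt (fun x : ℝ => ((0 : W), x)) ((0 : W), (1 : ℝ)) 0 :=
      (hasDerivAt_const 0 0).prodMk (hasDerivAt_id 0)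
    have := (swap_analytic.differentiableAt.hasFDerivAt.comp_hasDerivAt 0 line).deriv
    simpa [Function.comp_def] using this
  refine ⟨swap_contDiff.implicitFunction (by simp) invertible,
    (swap_contDiff.contDiffAt_implicitFunction (by simp) invertible).analyticAt,
    swap_contDiff.implicitFunction_apply_self (by simp) invertible, ?_⟩
  filter_upwards [swap_contDiff.eventually_apply_implicitFunction (by simp) invertible] with t ht
  exact ht.trans f_zero

lemma iteratedDeriv_fst_eq_of_taylor {f u : ℝ × W → ℝ} {a : ℕ → W → ℝ} {d : ℕ}
    (hu : AnalyticAt ℝ u 0)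
    (hf : ∀ᶠ p in 𝓝 0, f p = ∑ i ∈ Finset.range d, a i p.2 * p.1 ^ i + p.1 ^ d * u p) {k : ℕ}
    (hk : k < d) :
    ∀ᶠ t in 𝓝 0, iteratedDeriv k (fun x => f (x, t)) 0 = k.factorial * a k t := by
  have axis_tendsto : Tendsto (fun t : W => ((0 : ℝ), t)) (𝓝 0) (𝓝 0) :=
    Continuous.tendsto' (by fun_prop) _ _ rfl
  filter_upwards [axis_tendsto.eventually hf.eventually_nhds,
    axis_tendsto.eventually hu.eventually_analyticAt] with t hft hut
  have line_tendsto : Tendsto (fun x : ℝ => (x, t)) (𝓝 0) (𝓝 (0, t)) :=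
    Continuous.tendsto (by fun_prop) 0
  exact iteratedDeriv_eq_of_taylor (c := fun i => a i t)
    (AnalyticAt.fun_comp_of_eq hut (by fun_prop) rfl) (line_tendsto.eventually hft) hk

lemma exists_iteratedDeriv_fst_eq_zero [CompleteSpace W] {f : ℝ × W → ℝ} (hf : AnalyticAt ℝ f 0)
    {k : ℕ} (order : analyticOrderAt (fun x => f (x, 0)) 0 = (k + 1 : ℕ)) :
    ∃ h : W → ℝ, AnalyticAt ℝ h 0 ∧ h 0 = 0 ∧
      ∀ᶠ t in 𝓝 0, iteratedDeriv k (fun x => f (x, t)) (h t) = 0 := by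
  have axis_analytic : AnalyticAt ℝ (fun x => f (x, 0)) 0 :=
    AnalyticAt.fun_comp_of_eq hf (by fun_prop) rfl
  obtain ⟨deriv_zero, deriv_ne⟩ :=
    (analyticOrderAt_eq_nat_iff_iteratedDeriv_eq_zero axis_analytic).1 order
  rw [iteratedDeriv_succ] at deriv_ne
  exact exists_analytic_implicit_fst (analyticAt_iteratedDeriv_fst hf k)
    (deriv_zero k k.lt_succ_self) deriv_ne

/-- The shift `h` solves `∂₁ ^ (d - 1) f = 0`. -/
theorem exists_tschirnhausen [CompleteSpace W] {f : ℝ × W → ℝ} (hf : AnalyticAt ℝ f 0) {d : ℕ}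
    (order : analyticOrderAt (fun x => f (x, 0)) 0 = d) :
    ∃ (h : W → ℝ) (a : ℕ → W → ℝ) (u : ℝ × W → ℝ), AnalyticAt ℝ h 0 ∧ h 0 = 0 ∧
      (∀ i, AnalyticAt ℝ (a i) 0) ∧ (∀ i < d, a i 0 = 0) ∧ AnalyticAt ℝ u 0 ∧ u 0 ≠ 0 ∧
      ∀ᶠ p in 𝓝 0, f (p.1 + h p.2, p.2) =
        ∑ i ∈ Finset.range (d - 1), a i p.2 * p.1 ^ i + p.1 ^ d * u p := by
  obtain _ | k := d
  · have f_ne : f (0, 0) ≠ 0 := (analyticOrderAt_eq_zero.1 order).resolve_left <|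
      not_not.2 <| AnalyticAt.fun_comp_of_eq hf (by fun_prop) rfl
    exact ⟨0, 0, f, analyticAt_const, rfl, fun _ => analyticAt_const, fun _ _ => rfl, hf, f_ne,
      by simp⟩
  obtain ⟨h, hh, h_zero, h_root⟩ := exists_iteratedDeriv_fst_eq_zero hf order
  have : AnalyticAt ℝ (fun p : ℝ × W => h p.2) 0 := hh.fun_comp_of_eq analyticAt_snd rfl
  have shift_analytic : AnalyticAt ℝ (fun p : ℝ × W => f (p.1 + h p.2, p.2)) 0 :=
    AnalyticAt.fun_comp_of_eq hf (by fun_prop) (by simp [h_zero])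
  obtain ⟨a, u, ha, hu, taylor⟩ := exists_taylor_fst shift_analytic (k + 1)
  have line_tendsto : Tendsto (fun x : ℝ => (x, (0 : W))) (𝓝 0) (𝓝 0) :=
    Continuous.tendsto' (by fun_prop) _ _ rfl
  obtain ⟨a_zero, u_ne⟩ := taylor_coeff_of_order_eq (c := fun i => a i 0)
    (AnalyticAt.fun_comp_of_eq hu (by fun_prop) rfl) (line_tendsto.eventually taylor)
    (by simpa [h_zero] using order)
  have a_last : ∀ᶠ t in 𝓝 0, a k t = 0 := by
    filter_upwards [h_root, iteratedDeriv_fst_eq_of_taylor hu taylor k.lt_succ_self]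
      with t root coeff
    simp only [iteratedDeriv_comp_add_const k fun x => f (x, t), zero_add, root] at coeff
    exact (mul_eq_zero.1 coeff.symm).resolve_left (by positivity)
  refine ⟨h, a, u, hh, h_zero, ha, a_zero, hu, u_ne, ?_⟩
  have snd_tendsto : Tendsto (Prod.snd : ℝ × W → W) (𝓝 0) (𝓝 0) := continuous_snd.tendsto' _ _ rfl
  filter_upwards [taylor, snd_tendsto.eventually a_last] with p hp hpa
  rw [hp, Finset.sum_range_succ, hpa, zero_mul, add_zero, Nat.add_sub_cancel]

end Tschirnhausen

section Germs

variable {V : Type*} [NormedAddCommGroup V] [NormedSpace ℝ V]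

lemma eventually_eq_zero_or_of_mul {f g : V → ℝ} {x : V} (hf : AnalyticAt ℝ f x)
    (hg : AnalyticAt ℝ g x) (hfg : ∀ᶠ v in 𝓝 x, f v * g v = 0) :
    (∀ᶠ v in 𝓝 x, f v = 0) ∨ ∀ᶠ v in 𝓝 x, g v = 0 := by
  refine or_iff_not_imp_left.2 fun f_ne => ?_
  obtain ⟨r, hr, ball⟩ := Metric.eventually_nhds_iff_ball.1
    (hf.eventually_analyticAt.and (hg.eventually_analyticAt.and hfg))
  obtain ⟨w, hw, hfw⟩ : ∃ w ∈ Metric.ball x r, f w ≠ 0 := by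
    by_contra! f_eq
    exact f_ne (mem_of_superset (Metric.ball_mem_nhds x hr) f_eq)
  have g_near : g =ᶠ[𝓝 w] 0 := by
    filter_upwards [(ball w hw).1.continuousAt.eventually_ne hfw, Metric.isOpen_ball.mem_nhds hw]
      with v hv v_mem
    exact (mul_eq_zero.1 (ball v v_mem).2.2).resolve_left hv
  exact mem_of_superset (Metric.ball_mem_nhds x hr)
    (AnalyticOnNhd.eqOn_zero_of_preconnected_of_eventuallyEq_zero (fun v hv => (ball v hv).2.1)
      (convex_ball x r).isPreconnected hw g_near)

lemma exists_eventually_eq_zero_of_prod {κ : Type*} {s : Finset κ} {f : κ → V → ℝ} {x : V}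
    (hf : ∀ i ∈ s, AnalyticAt ℝ (f i) x) (hprod : ∀ᶠ v in 𝓝 x, ∏ i ∈ s, f i v = 0) :
    ∃ i ∈ s, ∀ᶠ v in 𝓝 x, f i v = 0 := by
  classical
  induction s using Finset.induction_on with
  | empty => simpa using hprod.self_of_nhds
  | insert i s hi ih =>
    rw [Finset.forall_mem_insert] at hf
    simp only [Finset.prod_insert hi] at hprod
    rcases eventually_eq_zero_or_of_mul hf.1 (Finset.analyticAt_fun_prod s hf.2) hprod
      with zero | prod_zero
    · exact ⟨i, Finset.mem_insert_self i s, zero⟩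
    · obtain ⟨j, hj, zero⟩ := ih hf.2 prod_zero
      exact ⟨j, Finset.mem_insert_of_mem hj, zero⟩

lemma exists_analyticOrderAt_ray_ne_top {f : V → ℝ} (hf : AnalyticAt ℝ f 0)
    (f_ne : ¬ ∀ᶠ v in 𝓝 0, f v = 0) :
    ∃ w : V, analyticOrderAt (fun s : ℝ => f (s • w)) 0 ≠ ⊤ := by
  obtain ⟨r, hr, ball⟩ := Metric.eventually_nhds_iff_ball.1 hf.eventually_analyticAt
  obtain ⟨w, hw, hfw⟩ : ∃ w ∈ Metric.ball (0 : V) r, f w ≠ 0 := by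
    by_contra! f_eq
    exact f_ne (mem_of_superset (Metric.ball_mem_nhds 0 hr) f_eq)
  refine ⟨w, fun order => hfw ?_⟩
  set L := (1 : ℝ →L[ℝ] ℝ).smulRight w
  have ray_analytic : AnalyticOnNhd ℝ (fun s : ℝ => f (s • w)) (L ⁻¹' Metric.ball 0 r) :=
    fun s hs => (ball _ hs).comp (L.analyticAt s)
  have ray_zero := ray_analytic.eqOn_zero_of_preconnected_of_eventuallyEq_zero
    ((convex_ball 0 r).linear_preimage L.toLinearMap).isPreconnected (z₀ := 0)
    (by simpa using hr) (analyticOrderAt_eq_top.1 order)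
  simpa using ray_zero (x := 1) (by simpa [L] using hw)

end Germs

section Monomials

variable {ι : Type*}

lemma not_eventually_coord_eq_zero (i : ι) : ¬ ∀ᶠ w : ι → ℝ in 𝓝 0, w i = 0 := by
  intro h
  have diag_tendsto : Tendsto (fun s : ℝ => (fun _ : ι => s)) (𝓝 0) (𝓝 0) :=
    Continuous.tendsto' (by fun_prop) _ _ rfl
  obtain ⟨s, hs, hs0⟩ :=
    (((diag_tendsto.eventually h).filter_mono nhdsWithin_le_nhds).and
      self_mem_nhdsWithin : ∀ᶠ s in 𝓝[≠] (0 : ℝ), s = 0 ∧ s ≠ 0).exists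
  exact hs0 hs

lemma exists_eq_add_single [DecidableEq ι] {α : ι → ℕ} {i : ι} (hi : α i ≠ 0) :
    ∃ β : ι → ℕ, α = β + Pi.single i 1 := by
  refine ⟨α - Pi.single i 1, (tsub_add_cancel_of_le fun j => ?_).symm⟩
  rcases eq_or_ne j i with rfl | hj
  · simpa using Nat.one_le_iff_ne_zero.2 hi
  · simp [hj]

variable [Fintype ι]

/-- The monomial `w ^ α` in multi-index notation. -/
def monomial (α : ι → ℕ) (w : ι → ℝ) : ℝ := ∏ i, w i ^ α i

@[fun_prop]
lemma analyticAt_coord (i : ι) (w : ι → ℝ) : AnalyticAt ℝ (fun w : ι → ℝ => w i) w :=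
  (ContinuousLinearMap.proj (R := ℝ) (φ := fun _ : ι => ℝ) i).analyticAt w

@[fun_prop]
lemma analyticAt_monomial (α : ι → ℕ) (w : ι → ℝ) : AnalyticAt ℝ (monomial α) w :=
  Finset.analyticAt_fun_prod _ fun i _ => (analyticAt_coord i w).pow (α i)

@[simp] lemma monomial_zero (w : ι → ℝ) : monomial 0 w = 1 := by simp [monomial]

lemma monomial_add (α β : ι → ℕ) (w : ι → ℝ) :
    monomial (α + β) w = monomial α w * monomial β w := by
  simp [monomial, pow_add, Finset.prod_mul_distrib]

lemma monomial_smul (k : ℕ) (α : ι → ℕ) (w : ι → ℝ) :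
    monomial (k • α) w = monomial α w ^ k := by
  simp [monomial, mul_comm k, pow_mul, Finset.prod_pow]

@[simp] lemma monomial_single [DecidableEq ι] (i : ι) (w : ι → ℝ) :
    monomial (Pi.single i 1) w = w i := by
  simp [monomial, Pi.single_apply, pow_ite]

lemma monomial_ne_zero (α : ι → ℕ) {w : ι → ℝ} (h : ∀ i, w i ≠ 0) : monomial α w ≠ 0 :=
  Finset.prod_ne_zero_iff.2 fun i _ => pow_ne_zero _ (h i)

lemma monomial_apply_zero {α : ι → ℕ} (h : α ≠ 0) : monomial α 0 = 0 := by
  obtain ⟨i, hi⟩ := Function.ne_iff.1 h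
  exact Finset.prod_eq_zero (Finset.mem_univ i) (zero_pow hi)

/-- The germ at `0` is a monomial times a unit, i.e. its zero set has normal crossings. -/
def IsNormalCrossing (g : (ι → ℝ) → ℝ) : Prop :=
  ∃ (α : ι → ℕ) (u : (ι → ℝ) → ℝ), AnalyticAt ℝ u 0 ∧ u 0 ≠ 0 ∧
    ∀ᶠ w in 𝓝 0, g w = monomial α w * u w

/-- The germ at `0` is either zero or a monomial times a unit. -/
def IsZeroOrNormalCrossing (g : (ι → ℝ) → ℝ) : Prop :=
  (∀ᶠ w in 𝓝 0, g w = 0) ∨ IsNormalCrossing g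

namespace IsNormalCrossing

variable {f g : (ι → ℝ) → ℝ}

lemma congr (hf : IsNormalCrossing f) (h : f =ᶠ[𝓝 0] g) : IsNormalCrossing g := by
  obtain ⟨α, u, hu, hu0, hfu⟩ := hf
  exact ⟨α, u, hu, hu0, by filter_upwards [hfu, h] with w h₁ h₂ using h₂ ▸ h₁⟩

lemma mul (hf : IsNormalCrossing f) (hg : IsNormalCrossing g) :
    IsNormalCrossing fun w => f w * g w := by
  obtain ⟨α, u, hu, hu0, hfu⟩ := hf
  obtain ⟨β, v, hv, hv0, hgv⟩ := hg
  refine ⟨α + β, fun w => u w * v w, hu.mul hv, mul_ne_zero hu0 hv0, ?_⟩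
  filter_upwards [hfu, hgv] with w h₁ h₂
  rw [h₁, h₂, monomial_add]
  ring

lemma of_ne_zero (hf : AnalyticAt ℝ f 0) (hf0 : f 0 ≠ 0) : IsNormalCrossing f :=
  ⟨0, f, hf, hf0, by simp⟩

lemma pow (hf : IsNormalCrossing f) (k : ℕ) : IsNormalCrossing fun w => f w ^ k := by
  induction k with
  | zero => simpa using of_ne_zero analyticAt_const one_ne_zero
  | succ k ih => simpa only [pow_succ] using ih.mul hf

lemma coord (i : ι) : IsNormalCrossing fun w : ι → ℝ => w i := by
  classical
  exact ⟨Pi.single i 1, fun _ => 1, analyticAt_const, one_ne_zero, by simp⟩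

lemma prod {κ : Type*} (S : Finset κ) {f : κ → (ι → ℝ) → ℝ}
    (hf : ∀ i ∈ S, IsNormalCrossing (f i)) : IsNormalCrossing fun w => ∏ i ∈ S, f i w := by
  classical
  induction S using Finset.induction_on with
  | empty => simpa using of_ne_zero analyticAt_const one_ne_zero
  | insert i S hi ih =>
    rw [Finset.forall_mem_insert] at hf
    simpa only [Finset.prod_insert hi] using hf.1.mul (ih hf.2)

lemma comp {κ : Type*} [Fintype κ] {φ : (κ → ℝ) → ι → ℝ}
    (hg : IsNormalCrossing g) (hφ : AnalyticAt ℝ φ 0) (hφ0 : φ 0 = 0)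
    (coords : ∀ i, IsNormalCrossing fun v => φ v i) : IsNormalCrossing fun v => g (φ v) := by
  obtain ⟨α, u, hu, hu0, hgu⟩ := hg
  refine ((prod Finset.univ fun i _ => (coords i).pow (α i)).mul
    (of_ne_zero (hu.fun_comp_of_eq hφ hφ0) (by rwa [hφ0]))).congr ?_
  filter_upwards [(hφ0 ▸ hφ.continuousAt.tendsto : Tendsto φ (𝓝 0) (𝓝 0)).eventually hgu] with v hv
  exact hv.symm

lemma comp_tail {m : ℕ} {g : (Fin m → ℝ) → ℝ} (hg : IsNormalCrossing g) :
    IsNormalCrossing fun v : Fin (m + 1) → ℝ => g (Fin.tail v) :=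
  hg.comp (analyticAt_pi_iff.2 fun i => analyticAt_coord i.succ 0) rfl fun i => .coord i.succ

end IsNormalCrossing

lemma IsZeroOrNormalCrossing.congr {f g : (ι → ℝ) → ℝ}
    (hf : IsZeroOrNormalCrossing f) (h : f =ᶠ[𝓝 0] g) : IsZeroOrNormalCrossing g :=
  hf.imp (fun zero => h.symm.trans zero) fun crossing => crossing.congr h

lemma eventually_eq_of_coord_mul_eq {f g : (ι → ℝ) → ℝ} (i : ι) (hf : AnalyticAt ℝ f 0)
    (hg : AnalyticAt ℝ g 0) (h : ∀ᶠ w in 𝓝 0, w i * f w = w i * g w) :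
    ∀ᶠ w in 𝓝 0, f w = g w := by
  have diff_zero : ∀ᶠ w in 𝓝 0, w i * (f w - g w) = 0 := by
    filter_upwards [h] with w hw
    rw [mul_sub, hw, sub_self]
  refine ((eventually_eq_zero_or_of_mul (analyticAt_coord i 0) (hf.sub hg) diff_zero).resolve_left
    (not_eventually_coord_eq_zero i)).mono fun w hw => sub_eq_zero.1 hw

lemma coord_dvd_or_dvd_of_dvd_mul {f g F : (ι → ℝ) → ℝ} (i : ι) (hf : AnalyticAt ℝ f 0)
    (hg : AnalyticAt ℝ g 0) (h : ∀ᶠ w in 𝓝 0, f w * g w = w i * F w) :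
    (∃ f', AnalyticAt ℝ f' 0 ∧ ∀ᶠ w in 𝓝 0, f w = w i * f' w) ∨
      ∃ g', AnalyticAt ℝ g' 0 ∧ ∀ᶠ w in 𝓝 0, g w = w i * g' w := by
  classical
  let P : (ι → ℝ) → (ι → ℝ) := fun w => w - w i • Pi.single i 1
  have P_analytic : AnalyticAt ℝ P 0 := by fun_prop
  have P_zero : P 0 = 0 := by simp [P]
  have product_zero : ∀ᶠ w in 𝓝 0, f (P w) * g (P w) = 0 := by
    filter_upwards [(P_zero ▸ P_analytic.continuousAt.tendsto).eventually h] with w hw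
    simp [hw, P]
  have dvd_of_zero {k : (ι → ℝ) → ℝ} (hk : AnalyticAt ℝ k 0)
      (zero : ∀ᶠ w in 𝓝 0, k (P w) = 0) :
      ∃ k', AnalyticAt ℝ k' 0 ∧ ∀ᶠ w in 𝓝 0, k w = w i * k' w := by
    obtain ⟨k', hk', hkk'⟩ := exists_analyticAt_eq_add_smul
      (ContinuousLinearMap.proj (R := ℝ) (φ := fun _ : ι => ℝ) i) (Pi.single i 1) hk
    refine ⟨k', hk', ?_⟩
    filter_upwards [hkk', zero] with w h₁ h₂
    exact h₁.trans (by rw [ContinuousLinearMap.proj_apply, h₂, zero_add, smul_eq_mul])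
  exact (eventually_eq_zero_or_of_mul (hf.comp_of_eq P_analytic P_zero)
    (hg.comp_of_eq P_analytic P_zero) product_zero).imp (dvd_of_zero hf) (dvd_of_zero hg)

lemma isNormalCrossing_of_mul_eq {f g u : (ι → ℝ) → ℝ} {α : ι → ℕ} (hf : AnalyticAt ℝ f 0)
    (hg : AnalyticAt ℝ g 0) (hu : AnalyticAt ℝ u 0) (hu0 : u 0 ≠ 0)
    (h : ∀ᶠ w in 𝓝 0, f w * g w = monomial α w * u w) : IsNormalCrossing f := by
  classical
  induction hn : ∑ i, α i generalizing α f g with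
  | zero =>
    obtain rfl : α = 0 := funext fun i => Finset.sum_eq_zero_iff.1 hn i (Finset.mem_univ i)
    refine .of_ne_zero hf (left_ne_zero_of_mul (b := g 0) ?_)
    simpa [h.self_of_nhds] using hu0
  | succ n ih =>
    obtain ⟨i, -, hi⟩ := Finset.exists_ne_zero_of_sum_ne_zero (hn.trans_ne n.succ_ne_zero)
    obtain ⟨β, rfl⟩ := exists_eq_add_single hi
    have sum_β : ∑ j, β j = n := by simpa [Finset.sum_add_distrib] using hn
    have h' : ∀ᶠ w in 𝓝 0, f w * g w = w i * (monomial β w * u w) := by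
      filter_upwards [h] with w hw
      rw [hw, monomial_add, monomial_single]
      ring
    rcases coord_dvd_or_dvd_of_dvd_mul i hf hg h' with ⟨f', hf', hff'⟩ | ⟨g', hg', hgg'⟩
    · refine ((IsNormalCrossing.coord i).mul (ih hf' hg (eventually_eq_of_coord_mul_eq i
        (hf'.mul hg) (by fun_prop) ?_) sum_β)).congr (hff'.mono fun w hw => hw.symm)
      filter_upwards [h', hff'] with w h₁ h₂
      rw [← h₁, h₂, mul_assoc]
    · refine ih hf hg' (eventually_eq_of_coord_mul_eq i (hf.mul hg') (by fun_prop) ?_) sum_β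
      filter_upwards [h', hgg'] with w h₁ h₂
      rw [← h₁, h₂, mul_left_comm]

lemma IsNormalCrossing.of_prod {κ : Type*} {s : Finset κ} {f : κ → (ι → ℝ) → ℝ}
    (hf : ∀ i ∈ s, AnalyticAt ℝ (f i) 0) (hprod : IsNormalCrossing fun w => ∏ i ∈ s, f i w)
    {i : κ} (hi : i ∈ s) : IsNormalCrossing (f i) := by
  classical
  obtain ⟨α, u, hu, hu0, h⟩ := hprod
  simp only [← Finset.mul_prod_erase s _ hi] at h
  exact isNormalCrossing_of_mul_eq (hf i hi)
    (Finset.analyticAt_fun_prod _ fun j hj => hf j (Finset.mem_of_mem_erase hj)) hu hu0 h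

lemma monomial_pow_weights (c α : ι → ℕ) (s : ℝ) :
    monomial α (fun i => s ^ c i) = s ^ (c ⬝ᵥ α) := by
  simp [monomial, dotProduct, ← pow_mul, Finset.prod_pow_eq_pow_sum]

lemma analyticAt_pow_weights (c : ι → ℕ) (s : ℝ) :
    AnalyticAt ℝ (fun s : ℝ => fun i => s ^ c i) s :=
  analyticAt_pi_iff.2 fun i => analyticAt_id.pow (c i)

lemma analyticOrderAt_monomial_mul_pow_weights {c α : ι → ℕ} (hc : ∀ i, c i ≠ 0)
    {u : (ι → ℝ) → ℝ} (hu : AnalyticAt ℝ u 0) (hu0 : u 0 ≠ 0) :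
    analyticOrderAt (fun s : ℝ => monomial α (fun i => s ^ c i) * u fun i => s ^ c i) 0
      = (c ⬝ᵥ α : ℕ) := by
  have curve_zero : (fun i => (0 : ℝ) ^ c i) = 0 := funext fun i => zero_pow (hc i)
  have hu' : AnalyticAt ℝ (fun s : ℝ => u fun i => s ^ c i) 0 :=
    hu.fun_comp_of_eq (analyticAt_pow_weights c 0) curve_zero
  have hu'0 : analyticOrderAt (fun s : ℝ => u fun i => s ^ c i) 0 = 0 :=
    hu'.analyticOrderAt_eq_zero.2 (by rwa [curve_zero])
  simp only [monomial_pow_weights]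
  change analyticOrderAt (id ^ (c ⬝ᵥ α) * fun s : ℝ => u fun i => s ^ c i) 0 = _
  rw [analyticOrderAt_mul (analyticAt_id.pow _) hu', analyticOrderAt_pow analyticAt_id,
    analyticOrderAt_id, hu'0, nsmul_one, add_zero]

/-- Compare the orders of vanishing along the curves `s ↦ (s ^ c i)ᵢ`. -/
lemma IsZeroOrNormalCrossing.exists_weight_eq {α β : ι → ℕ} {u v : (ι → ℝ) → ℝ}
    (hu : AnalyticAt ℝ u 0) (hv : AnalyticAt ℝ v 0) (hu0 : u 0 ≠ 0) (hv0 : v 0 ≠ 0)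
    (h : IsZeroOrNormalCrossing fun w => monomial α w * u w + monomial β w * v w) :
    ∃ γ : ι → ℕ, ∀ c : ι → ℕ, (∀ i, c i ≠ 0) → c ⬝ᵥ α ≠ c ⬝ᵥ β →
      c ⬝ᵥ γ = min (c ⬝ᵥ α) (c ⬝ᵥ β) := by
  have order_sum (c : ι → ℕ) (hc : ∀ i, c i ≠ 0) (hne : c ⬝ᵥ α ≠ c ⬝ᵥ β) :
      analyticOrderAt (fun s : ℝ => monomial α (fun i => s ^ c i) * u (fun i => s ^ c i) +
        monomial β (fun i => s ^ c i) * v fun i => s ^ c i) 0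
        = (min (c ⬝ᵥ α) (c ⬝ᵥ β) : ℕ) := by
    have order_α := analyticOrderAt_monomial_mul_pow_weights (α := α) hc hu hu0
    have order_β := analyticOrderAt_monomial_mul_pow_weights (α := β) hc hv hv0
    refine (analyticOrderAt_add_of_ne ?_).trans ?_
    · rw [order_α, order_β]
      exact_mod_cast hne
    · rw [order_α, order_β]
      exact (Nat.mono_cast.map_min).symm
  have curve_tendsto (c : ι → ℕ) (hc : ∀ i, c i ≠ 0) :
      Tendsto (fun s : ℝ => fun i => s ^ c i) (𝓝 0) (𝓝 0) :=
    Continuous.tendsto' (by fun_prop) _ _ (funext fun i => zero_pow (hc i))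
  rcases h with zero | ⟨γ, w, hw, hw0, h⟩
  · refine ⟨α, fun c hc hne => absurd (order_sum c hc hne) ?_⟩
    rw [analyticOrderAt_eq_top.2 ((curve_tendsto c hc).eventually zero)]
    exact (ENat.natCast_lt_top _).ne'
  · refine ⟨γ, fun c hc hne => ?_⟩
    have order_γ := analyticOrderAt_monomial_mul_pow_weights (α := γ) hc hw hw0
    have order_eq := (order_sum c hc hne).symm.trans
      (analyticOrderAt_congr ((curve_tendsto c hc).eventually h))
    rw [order_γ] at order_eq
    exact_mod_cast order_eq.symm

lemma exists_weight_lt {α β : ι → ℕ} (h : ¬ β ≤ α) :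
    ∃ c : ι → ℕ, (∀ i, c i ≠ 0) ∧ c ⬝ᵥ α < c ⬝ᵥ β := by
  classical
  obtain ⟨k, hk⟩ : ∃ k, α k < β k := by simpa [Pi.le_def] using h
  refine ⟨1 + Pi.single k (1 ⬝ᵥ α + 1), fun i => by simp, ?_⟩
  simp only [add_dotProduct, single_dotProduct]
  nlinarith [Nat.mul_le_mul_left (1 ⬝ᵥ α + 1) (Nat.succ_le_of_lt hk)]

lemma IsZeroOrNormalCrossing.le_or_le {α β : ι → ℕ} {u v : (ι → ℝ) → ℝ}
    (hu : AnalyticAt ℝ u 0) (hv : AnalyticAt ℝ v 0) (hu0 : u 0 ≠ 0) (hv0 : v 0 ≠ 0)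
    (h : IsZeroOrNormalCrossing fun w => monomial α w * u w + monomial β w * v w) :
    α ≤ β ∨ β ≤ α := by
  by_contra! incomparable
  obtain ⟨γ, hγ⟩ := h.exists_weight_eq hu hv hu0 hv0
  obtain ⟨c, hc, hcαβ⟩ := exists_weight_lt incomparable.2
  obtain ⟨c', hc', hcβα⟩ := exists_weight_lt incomparable.1
  -- A linear form in `c` cannot equal this `min` both where `c ⬝ᵥ α` is smaller and where `c ⬝ᵥ β`
  -- is; `c + c' + c'` serves when the two agree at `c + c'`.
  have h₁ := hγ c hc hcαβ.ne
  have h₂ := hγ c' hc' hcβα.ne'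
  have h₃ := hγ (c + c') fun i => by simp [hc i]
  have h₄ := hγ (c + c' + c') fun i => by simp [hc i]
  simp only [add_dotProduct] at h₃ h₄
  omega

end Monomials

section Uniformization

variable {X V W W' : Type*} {𝓤 : Ultrafilter X}
  [NormedAddCommGroup V] [NormedSpace ℝ V] [NormedAddCommGroup W] [NormedSpace ℝ W]
  [NormedAddCommGroup W'] [NormedSpace ℝ W']

lemma tendsto_or_tendsto_inv (𝓤 : Ultrafilter X) (y : X → ℝ) :
    (∃ c, Tendsto y 𝓤 (𝓝 c)) ∨ Tendsto (fun x => (y x)⁻¹) 𝓤 (𝓝 0) := by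
  by_cases bounded : ∃ K, IsCompact K ∧ ∀ᶠ x in 𝓤, y x ∈ K
  · obtain ⟨K, hK, hyK⟩ := bounded
    obtain ⟨c, -, hc⟩ := hK.ultrafilter_le_nhds (𝓤.map y) (le_principal_iff.2 hyK)
    exact Or.inl ⟨c, hc⟩
  · push Not at bounded
    refine Or.inr (tendsto_inv₀_cobounded.comp ?_)
    rw [Metric.cobounded_eq_cocompact, hasBasis_cocompact.tendsto_right_iff]
    exact bounded

/-- The points `z x` lift, along the ultrafilter `𝓤`, to points `w x` converging to the origin of
the chart `φ`. The ultrafilter plays the role of a valuation in local uniformization. -/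
structure IsLift (𝓤 : Ultrafilter X) (φ : W → V) (z : X → V) (w : X → W) : Prop where
  tendsto : Tendsto w 𝓤 (𝓝 0)
  analyticAt : AnalyticAt ℝ φ 0
  map_zero : φ 0 = 0
  eventually_eq : ∀ᶠ x in 𝓤, z x = φ (w x)

namespace IsLift

variable {φ : W → V} {ψ : W' → W} {z : X → V} {w : X → W} {w' : X → W'}

lemma tendsto_chart (h : IsLift 𝓤 φ z w) : Tendsto φ (𝓝 0) (𝓝 0) := by
  simpa only [h.map_zero] using h.analyticAt.continuousAt.tendsto

lemma analyticAt_comp {g : V → ℝ} (h : IsLift 𝓤 φ z w) (hg : AnalyticAt ℝ g 0) :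
    AnalyticAt ℝ (fun v => g (φ v)) 0 :=
  hg.fun_comp_of_eq h.analyticAt h.map_zero

lemma comp (hφ : IsLift 𝓤 φ z w) (hψ : IsLift 𝓤 ψ w w') :
    IsLift 𝓤 (fun v => φ (ψ v)) z w' where
  tendsto := hψ.tendsto
  analyticAt := hφ.analyticAt.fun_comp_of_eq hψ.analyticAt hψ.map_zero
  map_zero := by rw [hψ.map_zero, hφ.map_zero]
  eventually_eq := by
    filter_upwards [hφ.eventually_eq, hψ.eventually_eq] with x h₁ h₂
    rw [h₁, h₂]

lemma id (hz : Tendsto z 𝓤 (𝓝 0)) : IsLift 𝓤 (fun v => v) z z :=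
  ⟨hz, analyticAt_id, rfl, .of_forall fun _ => rfl⟩

lemma of_equiv (L : W ≃L[ℝ] V) (hz : Tendsto z 𝓤 (𝓝 0)) :
    IsLift 𝓤 (fun v => L v) z fun x => L.symm (z x) :=
  ⟨(L.symm.continuous.tendsto' _ _ L.symm.map_zero).comp hz, L.analyticAt 0, L.map_zero, by simp⟩

lemma prodMk_fst {y : X → ℝ} (hy : Tendsto y 𝓤 (𝓝 0)) (h : IsLift 𝓤 φ z w) :
    IsLift 𝓤 (fun p : ℝ × W => (p.1, φ p.2)) (fun x => (y x, z x)) fun x => (y x, w x) where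
  tendsto := hy.prodMk_nhds h.tendsto
  analyticAt := analyticAt_fst.prod (h.analyticAt.fun_comp_of_eq analyticAt_snd rfl)
  map_zero := by simp [h.map_zero]
  eventually_eq := by
    filter_upwards [h.eventually_eq] with x hx
    rw [hx]

end IsLift

/-- The pullback of `g` to some `m`-dimensional chart containing a lift of `z` is zero or has normal
crossings. -/
def IsUniformizable (𝓤 : Ultrafilter X) (m : ℕ) (z : X → V) (g : V → ℝ) : Prop :=
  ∃ (φ : (Fin m → ℝ) → V) (w : X → Fin m → ℝ), IsLift 𝓤 φ z w ∧
    IsZeroOrNormalCrossing fun v => g (φ v)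

/-- Local uniformization in dimension `m` along the ultrafilter `𝓤`. -/
def HasUniformization (𝓤 : Ultrafilter X) (m : ℕ) : Prop :=
  ∀ (z : X → Fin m → ℝ) (g : (Fin m → ℝ) → ℝ), Tendsto z 𝓤 (𝓝 0) → AnalyticAt ℝ g 0 →
    IsUniformizable 𝓤 m z g

namespace IsUniformizable

variable {m : ℕ} {z : X → V} {g g' : V → ℝ}

lemma congr (h : IsUniformizable 𝓤 m z g) (hg : g =ᶠ[𝓝 0] g') : IsUniformizable 𝓤 m z g' := by
  obtain ⟨φ, w, hφ, hgφ⟩ := h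
  exact ⟨φ, w, hφ, hgφ.congr (hφ.tendsto_chart.eventually hg)⟩

lemma of_isLift {φ : W → V} {w : X → W} (hφ : IsLift 𝓤 φ z w)
    (h : IsUniformizable 𝓤 m w fun v => g (φ v)) : IsUniformizable 𝓤 m z g := by
  obtain ⟨ψ, w', hψ, hgψ⟩ := h
  exact ⟨_, w', hφ.comp hψ, hgψ⟩

lemma succ (h : IsUniformizable 𝓤 m z g) : IsUniformizable 𝓤 (m + 1) z g := by
  obtain ⟨φ, w, hφ, hgφ⟩ := h
  have tail_analytic : AnalyticAt ℝ (fun v : Fin (m + 1) → ℝ => Fin.tail v) 0 :=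
    analyticAt_pi_iff.2 fun i => analyticAt_coord i.succ 0
  have tail_lift : IsLift 𝓤 (fun v : Fin (m + 1) → ℝ => Fin.tail v) w fun x => Fin.cons 0 (w x) :=
    ⟨tendsto_pi_nhds.2 fun i => by
      induction i using Fin.cases with
      | zero => simp
      | succ i => simpa using tendsto_pi_nhds.1 hφ.tendsto i,
    tail_analytic, rfl, by simp⟩
  exact ⟨_, _, hφ.comp tail_lift,
    hgφ.imp tail_lift.tendsto_chart.eventually IsNormalCrossing.comp_tail⟩

end IsUniformizable

namespace HasUniformization

variable {m : ℕ}

lemma isUniformizable_of_coord_eq_zero (hU : HasUniformization 𝓤 m) {z : X → Fin (m + 1) → ℝ}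
    (hz : Tendsto z 𝓤 (𝓝 0)) {i : Fin (m + 1)} (hi : ∀ᶠ x in 𝓤, z x i = 0)
    {g : (Fin (m + 1) → ℝ) → ℝ} (hg : AnalyticAt ℝ g 0) : IsUniformizable 𝓤 (m + 1) z g := by
  let φ : (Fin m → ℝ) → Fin (m + 1) → ℝ := fun v => i.insertNth 0 v
  have φ_analytic : AnalyticAt ℝ φ 0 := analyticAt_pi_iff.2 fun j => by
    induction j using Fin.succAboveCases i with
    | x => simpa [φ] using analyticAt_const
    | p j => simpa [φ] using analyticAt_coord j 0
  have insert_lift : IsLift 𝓤 φ z fun x => i.removeNth (z x) :=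
    ⟨tendsto_pi_nhds.2 fun j => tendsto_pi_nhds.1 hz _, φ_analytic,
      funext fun j => by induction j using Fin.succAboveCases i <;> simp [φ],
      by filter_upwards [hi] with x hx using by simp [φ, ← hx]⟩
  exact (IsUniformizable.of_isLift insert_lift
    (hU _ _ insert_lift.tendsto (insert_lift.analyticAt_comp hg))).succ

lemma exists_isLift_finset (hU : HasUniformization 𝓤 m) {κ : Type*} (S : Finset κ)
    {z : X → Fin m → ℝ} (hz : Tendsto z 𝓤 (𝓝 0)) {g : κ → (Fin m → ℝ) → ℝ}
    (hg : ∀ i ∈ S, AnalyticAt ℝ (g i) 0) :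
    ∃ (φ : (Fin m → ℝ) → Fin m → ℝ) (w : X → Fin m → ℝ), IsLift 𝓤 φ z w ∧
      ∀ i ∈ S, IsZeroOrNormalCrossing fun v => g i (φ v) := by
  classical
  induction S using Finset.strongInduction generalizing z g with
  | H S ih =>
    obtain ⟨φ, w, hφ, zero | crossing⟩ := hU z _ hz (Finset.analyticAt_fun_prod S hg)
    · obtain ⟨i, hi, zero_i⟩ :=
        exists_eventually_eq_zero_of_prod (fun i hi => hφ.analyticAt_comp (hg i hi)) zero
      obtain ⟨ψ, w', hψ, hgψ⟩ := ih _ (Finset.erase_ssubset hi) hφ.tendsto fun j hj =>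
        hφ.analyticAt_comp (hg j (Finset.mem_of_mem_erase hj))
      refine ⟨_, w', hφ.comp hψ, fun j hj => ?_⟩
      rcases eq_or_ne j i with rfl | hji
      · exact Or.inl (hψ.tendsto_chart.eventually zero_i)
      · exact hgψ j (Finset.mem_erase.2 ⟨hji, hj⟩)
    · exact ⟨φ, w, hφ, fun i hi =>
        Or.inr (.of_prod (fun j hj => hφ.analyticAt_comp (hg j hj)) crossing hi)⟩

end HasUniformization

end Uniformization

section BlowUps

variable {X ι : Type*} [Fintype ι] {𝓤 : Ultrafilter X}

lemma isNormalCrossing_coord_mul_const_add_coord (i k : ι) (c : ℝ) :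
    IsNormalCrossing fun w : ι → ℝ => w k * (c + w i) := by
  refine (IsNormalCrossing.coord k).mul ?_
  rcases eq_or_ne c 0 with rfl | hc
  · simpa using IsNormalCrossing.coord i
  · exact .of_ne_zero (by fun_prop) (by simpa using hc)

lemma monomial_update [DecidableEq ι] {α : ι → ℕ} {i : ι} (hi : α i = 0) (w : ι → ℝ) (y : ℝ) :
    monomial α (Function.update w i y) = monomial α w := by
  refine Finset.prod_congr rfl fun j _ => ?_
  rcases eq_or_ne j i with rfl | hj
  · simp [hi]
  · rw [Function.update_of_ne hj]

lemma isLift_update [DecidableEq ι] {z : X → ι → ℝ} {y : X → ℝ} {p : (ι → ℝ) → ℝ} {i : ι}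
    (hz : Tendsto z 𝓤 (𝓝 0)) (hy : Tendsto y 𝓤 (𝓝 0)) (hp : AnalyticAt ℝ p 0) (hp0 : p 0 = 0)
    (hzp : ∀ᶠ x in 𝓤, z x i = p (Function.update (z x) i (y x))) :
    IsLift 𝓤 (fun w => Function.update w i (p w)) z fun x => Function.update (z x) i (y x) where
  tendsto := by simpa using hz.update i hy
  analyticAt := analyticAt_pi_iff.2 fun j => by
    rcases eq_or_ne j i with rfl | hj
    · simpa using hp
    · simpa [hj] using analyticAt_coord j 0
  map_zero := by simp [hp0]
  eventually_eq := by
    filter_upwards [hzp] with x hx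
    simp [← hx]

lemma isNormalCrossing_update [DecidableEq ι] {p : (ι → ℝ) → ℝ} (hp : IsNormalCrossing p)
    (i j : ι) :
    IsNormalCrossing fun w => Function.update w i (p w) j := by
  rcases eq_or_ne j i with rfl | hj
  · simpa using hp
  · simpa [hj] using IsNormalCrossing.coord j

lemma exists_isLift_coord_dvd_monomial_of_tendsto_div {β : ι → ℕ} {i k : ι} (hik : k ≠ i)
    {z : X → ι → ℝ} (hz : Tendsto z 𝓤 (𝓝 0)) (hzk : ∀ᶠ x in 𝓤, z x k ≠ 0)
    (hβ : Tendsto (fun x => monomial β (z x) * z x i / z x k) 𝓤 (𝓝 0)) {c : ℝ}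
    (hc : Tendsto (fun x => z x i / z x k) 𝓤 (𝓝 c)) :
    ∃ (φ : (ι → ℝ) → ι → ℝ) (w : X → ι → ℝ) (r : (ι → ℝ) → ℝ), IsLift 𝓤 φ z w ∧
      (∀ i, IsNormalCrossing fun v => φ v i) ∧ AnalyticAt ℝ r 0 ∧ r 0 = 0 ∧
      ∀ v, monomial β (φ v) * φ v i = φ v k * r v := by
  classical
  set φ : (ι → ℝ) → ι → ℝ := fun w => Function.update w i (w k * (c + w i))
  set w : X → ι → ℝ := fun x => Function.update (z x) i (z x i / z x k - c)
  have hφ : IsLift 𝓤 φ z w := isLift_update hz (by simpa using hc.sub_const c) (by fun_prop)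
    (by simp) <| by
      filter_upwards [hzk] with x hx
      simp [hik, mul_div_cancel₀ _ hx]
  set r : (ι → ℝ) → ℝ := fun v => monomial β (φ v) * (c + v i)
  have hr : AnalyticAt ℝ r 0 :=
    (hφ.analyticAt_comp (analyticAt_monomial β 0)).mul (by fun_prop)
  have dvd (v : ι → ℝ) : monomial β (φ v) * φ v i = φ v k * r v := by
    simp only [r, φ, Function.update_self, Function.update_of_ne hik]
    ring
  have r_tendsto : Tendsto (fun x => r (w x)) 𝓤 (𝓝 0) := hβ.congr' <| by
    filter_upwards [hφ.eventually_eq, hzk] with x h₁ h₂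
    rw [h₁] at h₂ ⊢
    rw [dvd, mul_div_cancel_left₀ _ h₂]
  exact ⟨φ, w, r, hφ,
    isNormalCrossing_update (isNormalCrossing_coord_mul_const_add_coord i k c) i, hr,
    tendsto_nhds_unique (hr.continuousAt.tendsto.comp hφ.tendsto) r_tendsto, dvd⟩

/-- Blow up `w i = w k = 0` repeatedly, each time in the chart where the lift stays bounded. -/
theorem exists_isLift_coord_dvd_monomial {α : ι → ℕ} {k : ι} (hk : α k = 0) {z : X → ι → ℝ}
    (hz : Tendsto z 𝓤 (𝓝 0)) (hz0 : ∀ i, ∀ᶠ x in 𝓤, z x i ≠ 0)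
    (hα : Tendsto (fun x => monomial α (z x) / z x k) 𝓤 (𝓝 0)) :
    ∃ (φ : (ι → ℝ) → ι → ℝ) (w : X → ι → ℝ) (r : (ι → ℝ) → ℝ), IsLift 𝓤 φ z w ∧
      (∀ i, IsNormalCrossing fun v => φ v i) ∧ AnalyticAt ℝ r 0 ∧ r 0 = 0 ∧
      ∀ v, monomial α (φ v) = φ v k * r v := by
  classical
  induction hn : ∑ i, α i generalizing α z with
  | zero =>
    obtain rfl : α = 0 := funext fun i => Finset.sum_eq_zero_iff.1 hn i (Finset.mem_univ i)
    have one_tendsto : Tendsto (fun _ : X => (1 : ℝ)) 𝓤 (𝓝 (0 * 0)) :=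
      (hα.mul (tendsto_pi_nhds.1 hz k)).congr' (by
        filter_upwards [hz0 k] with x hx
        rw [monomial_zero, div_mul_cancel₀ _ hx])
    simpa using tendsto_nhds_unique one_tendsto tendsto_const_nhds
  | succ n ih =>
    obtain ⟨i, -, hi⟩ := Finset.exists_ne_zero_of_sum_ne_zero (hn.trans_ne n.succ_ne_zero)
    have hik : k ≠ i := fun h => hi (h ▸ hk)
    obtain ⟨β, rfl⟩ := exists_eq_add_single hi
    have hβk : β k = 0 := by simpa [hik] using hk
    have sum_β : ∑ j, β j = n := by simpa [Finset.sum_add_distrib] using hn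
    simp only [monomial_add, monomial_single] at hα ⊢
    rcases tendsto_or_tendsto_inv 𝓤 fun x => z x i / z x k with ⟨c, hc⟩ | hy
    · exact exists_isLift_coord_dvd_monomial_of_tendsto_div hik hz (hz0 k) hα hc
    · simp only [inv_div] at hy
      have hφ : IsLift 𝓤 (fun w => Function.update w k (w i * w k)) z _ :=
        isLift_update hz hy (by fun_prop) (by simp) <| by
          filter_upwards [hz0 i] with x hx
          simp [hik.symm, mul_div_cancel₀ _ hx]
      have lift_ne (j : ι) : ∀ᶠ x in 𝓤, Function.update (z x) k (z x k / z x i) j ≠ 0 := by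
        rcases eq_or_ne j k with rfl | hj
        · filter_upwards [hz0 i, hz0 j] with x h₁ h₂
          simp [h₁, h₂]
        · simpa [hj] using hz0 j
      obtain ⟨ψ, w, r, hψ, coords, hr, hr0, dvd⟩ := ih hβk hφ.tendsto lift_ne (by
        simpa only [monomial_update hβk, Function.update_self, div_div_eq_mul_div] using hα) sum_β
      refine ⟨_, w, r, hφ.comp hψ, fun j => ?_, hr, hr0, fun v => ?_⟩
      · exact (isNormalCrossing_update ((IsNormalCrossing.coord i).mul (.coord k)) k j).comp
          hψ.analyticAt hψ.map_zero coords
      · simp only [monomial_update hβk, dvd, Function.update_self, Function.update_of_ne hik.symm]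
        ring

end BlowUps

section OrderReduction

section Polynomial

open Polynomial

lemma eq_C_mul_X_pow_of_coeff_taylor_eq_zero {R : Type*} [CommRing R] [NoZeroDivisors R]
    [CharZero R] {p : R[X]} {d : ℕ} {y : R} (hd : 0 < d) (deg : p.natDegree ≤ d)
    (next : p.coeff (d - 1) = 0) (coeff_taylor : ∀ j < d, (taylor y p).coeff j = 0) :
    p = C (p.coeff d) * X ^ d := by
  obtain ⟨b, hb⟩ : ∃ b, taylor y p = C b * X ^ d := by
    refine ⟨(taylor y p).coeff d, ext fun j => ?_⟩
    rw [coeff_C_mul_X_pow]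
    split_ifs with h
    · rw [h]
    · rcases lt_or_gt_of_ne h with h | h
      · exact coeff_taylor j h
      · exact coeff_eq_zero_of_natDegree_lt (by rw [natDegree_taylor]; omega)
  have hp : p = C b * (X + C (-y)) ^ d := by
    have := congrArg (taylor (-y)) hb
    rw [taylor_taylor] at this
    simpa [taylor_apply] using this
  have coeff_d : p.coeff d = b := by
    rw [hp, coeff_C_mul, coeff_X_add_C_pow]
    simp
  have coeff_next : b * (-y * d) = 0 := by
    rw [hp, coeff_C_mul, coeff_X_add_C_pow, Nat.sub_sub_self hd, Nat.choose_symm hd] at next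
    simpa using next
  rw [coeff_d]
  rcases mul_eq_zero.1 coeff_next with rfl | hy
  · simpa using hp
  · obtain rfl : y = 0 :=
      neg_eq_zero.1 ((mul_eq_zero.1 hy).resolve_right (by exact_mod_cast hd.ne'))
    simpa using hp

lemma analyticOrderAt_eval_add_lt {p : ℝ[X]} {d i : ℕ} (deg : p.natDegree ≤ d)
    (next : p.coeff (d - 1) = 0) (hi : i < d) (hpi : p.coeff i ≠ 0) (c : ℝ) :
    analyticOrderAt (fun y => p.eval (y + c)) 0 < d := by
  have eval_analytic : AnalyticAt ℝ (fun y => p.eval (y + c)) 0 := by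
    simpa only [← coe_aeval_eq_eval] using
      AnalyticAt.aeval_polynomial (f := fun y => y + c) (by fun_prop) p
  by_contra! order
  rw [natCast_le_analyticOrderAt_iff_iteratedDeriv_eq_zero eval_analytic] at order
  have eval_taylor (y : ℝ) : p.eval (y + c) =
      ∑ i ∈ Finset.range d, (taylor c p).coeff i * y ^ i + y ^ d * (taylor c p).coeff d := by
    rw [← taylor_eval, eval_eq_sum_range' (n := d + 1) (by rw [natDegree_taylor]; omega),
      Finset.sum_range_succ, mul_comm (y ^ d)]
  have coeff_taylor (j : ℕ) (hj : j < d) : (taylor c p).coeff j = 0 := by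
    have := iteratedDeriv_eq_of_taylor analyticAt_const (.of_forall eval_taylor) hj
    rw [order j hj, zero_eq_mul] at this
    exact this.resolve_left (by exact_mod_cast j.factorial_ne_zero)
  rw [eq_C_mul_X_pow_of_coeff_taylor_eq_zero (by omega) deg next coeff_taylor,
    coeff_C_mul_X_pow, if_neg hi.ne] at hpi
  exact hpi rfl

lemma analyticOrderAt_sum_add_lt {d i : ℕ} {a : ℕ → ℝ} {u : ℝ} (hi : i < d - 1) (hai : a i ≠ 0)
    (c : ℝ) :
    analyticOrderAt
      (fun y => ∑ j ∈ Finset.range (d - 1), a j * (c + y) ^ j + (c + y) ^ d * u) 0 < d := by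
  set p : ℝ[X] := ∑ j ∈ Finset.range (d - 1), C (a j) * X ^ j + C u * X ^ d
  have coeff_p (k : ℕ) :
      p.coeff k = (if k < d - 1 then a k else 0) + if k = d then u else 0 := by
    simp [p, coeff_X_pow]
  have deg : p.natDegree ≤ d := natDegree_le_iff_coeff_eq_zero.2 fun k hk => by
    rw [coeff_p, if_neg (by omega), if_neg (by omega), add_zero]
  have next : p.coeff (d - 1) = 0 := by
    rw [coeff_p, if_neg (by omega), if_neg (by omega), add_zero]
  have coeff_i : p.coeff i ≠ 0 := by
    rwa [coeff_p, if_pos hi, if_neg (by omega), add_zero]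
  convert analyticOrderAt_eval_add_lt deg next (by omega) coeff_i c using 2
  ext y
  simp [p, eval_finsetSum, add_comm y, mul_comm u]

end Polynomial

variable {X : Type*} {𝓤 : Ultrafilter X} {m : ℕ}

lemma monomial_cons_zero (α : Fin m → ℕ) (v : Fin (m + 1) → ℝ) :
    monomial (Fin.cons 0 α) v = monomial α (Fin.tail v) := by
  simp [monomial, Fin.prod_univ_succ, Fin.tail]

/-- A function in Tschirnhausen form of order `d` (no term of degree `d - 1` in the first
coordinate) whose `i`-th coefficient is divisible by the `(d - i)`-th power of a monomial. -/
def weightedForm (d : ℕ) (α : Fin m → ℕ) (a : ℕ → (Fin m → ℝ) → ℝ)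
    (u : ℝ × (Fin m → ℝ) → ℝ) (p : ℝ × (Fin m → ℝ)) : ℝ :=
  ∑ i ∈ Finset.range (d - 1), monomial α p.2 ^ (d - i) * a i p.2 * p.1 ^ i + p.1 ^ d * u p

variable {d : ℕ} {α : Fin m → ℕ} {a : ℕ → (Fin m → ℝ) → ℝ} {u : ℝ × (Fin m → ℝ) → ℝ}

lemma weightedForm_monomial_mul (y : ℝ) (s : Fin m → ℝ) :
    weightedForm d α a u (monomial α s * y, s) = monomial α s ^ d *
      (∑ i ∈ Finset.range (d - 1), a i s * y ^ i + y ^ d * u (monomial α s * y, s)) := by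
  rw [weightedForm, mul_add, Finset.mul_sum, mul_pow, mul_assoc]
  congr 1
  refine Finset.sum_congr rfl fun i hi => ?_
  have := Finset.mem_range.1 hi
  rw [← pow_sub_mul_pow _ (show i ≤ d by omega), mul_pow]
  ring

lemma weightedForm_of_monomial_eq_mul {p : ℝ × (Fin m → ℝ)} {r : ℝ}
    (h : monomial α p.2 = p.1 * r) :
    weightedForm d α a u p =
      p.1 ^ d * (∑ i ∈ Finset.range (d - 1), a i p.2 * r ^ (d - i) + u p) := by
  rw [weightedForm, mul_add, Finset.mul_sum, h]
  congr 1
  refine Finset.sum_congr rfl fun i hi => ?_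
  have := Finset.mem_range.1 hi
  rw [← pow_sub_mul_pow p.1 (show i ≤ d by omega), mul_pow]
  ring

lemma analyticAt_weightedForm (ha : ∀ i, AnalyticAt ℝ (a i) 0) (hu : AnalyticAt ℝ u 0) :
    AnalyticAt ℝ (weightedForm d α a u) 0 := by
  have (i : ℕ) : AnalyticAt ℝ (fun p : ℝ × (Fin m → ℝ) => a i p.2) 0 :=
    (ha i).fun_comp_of_eq analyticAt_snd rfl
  unfold weightedForm
  exact (Finset.analyticAt_fun_sum _ fun i _ => by fun_prop).add (by fun_prop)

/-- Local uniformization along `𝓤` of the products `f (x, s) * g s` where `f` has order `d` in the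
first coordinate. -/
def HasUniformizationOfOrder (𝓤 : Ultrafilter X) (m d : ℕ) : Prop :=
  ∀ (z : X → ℝ × (Fin m → ℝ)) (f : ℝ × (Fin m → ℝ) → ℝ) (g : (Fin m → ℝ) → ℝ),
    Tendsto z 𝓤 (𝓝 0) → AnalyticAt ℝ f 0 → AnalyticAt ℝ g 0 →
    analyticOrderAt (fun x => f (x, 0)) 0 = d →
    IsUniformizable 𝓤 (m + 1) z fun p => f p * g p.2

lemma isUniformizable_of_tendsto_div (ih : ∀ j < d, HasUniformizationOfOrder 𝓤 m j)
    {z : X → ℝ × (Fin m → ℝ)} (hz : Tendsto z 𝓤 (𝓝 0)) {g : (Fin m → ℝ) → ℝ}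
    (hg : AnalyticAt ℝ g 0) (ha : ∀ i, AnalyticAt ℝ (a i) 0) (hu : AnalyticAt ℝ u 0)
    (hα : α ≠ 0) {i : ℕ} (hi : i < d - 1) (hai : a i 0 ≠ 0)
    (hzα : ∀ᶠ x in 𝓤, monomial α (z x).2 ≠ 0) {c : ℝ}
    (hc : Tendsto (fun x => (z x).1 / monomial α (z x).2) 𝓤 (𝓝 c)) :
    IsUniformizable 𝓤 (m + 1) z fun p => weightedForm d α a u p * g p.2 := by
  set ψ : ℝ × (Fin m → ℝ) → ℝ × (Fin m → ℝ) := fun p => (monomial α p.2 * (c + p.1), p.2)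
  have hψ : IsLift 𝓤 ψ z fun x => ((z x).1 / monomial α (z x).2 - c, (z x).2) :=
    { tendsto := Tendsto.prodMk_nhds (by simpa using hc.sub_const c)
        hz.snd_nhds
      analyticAt := by fun_prop
      map_zero := by simp [ψ, monomial_apply_zero hα]
      eventually_eq := by
        filter_upwards [hzα] with x hx
        simp [ψ, mul_div_cancel₀ _ hx] }
  set f' : ℝ × (Fin m → ℝ) → ℝ := fun p =>
    ∑ i ∈ Finset.range (d - 1), a i p.2 * (c + p.1) ^ i + (c + p.1) ^ d * u (ψ p)
  have f'_analytic : AnalyticAt ℝ f' 0 := by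
    have (i : ℕ) : AnalyticAt ℝ (fun p : ℝ × (Fin m → ℝ) => a i p.2) 0 :=
      (ha i).fun_comp_of_eq analyticAt_snd rfl
    exact (Finset.analyticAt_fun_sum _ fun i _ => by fun_prop).add
      (.mul (by fun_prop) (hψ.analyticAt_comp hu))
  have f'_order : analyticOrderAt (fun y => f' (y, 0)) 0 < d := by
    have hψ0 (y : ℝ) : ψ (y, 0) = 0 := by simp [ψ, monomial_apply_zero hα]
    simpa only [f', hψ0] using analyticOrderAt_sum_add_lt hi hai c
  obtain ⟨j, hj⟩ := ENat.ne_top_iff_exists.1 f'_order.ne_top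
  have hjd : j < d := by rwa [← hj, Nat.cast_lt] at f'_order
  have pullback : IsUniformizable 𝓤 (m + 1) _ fun p => f' p * (monomial α p.2 ^ d * g p.2) :=
    ih j hjd _ f' (fun s => monomial α s ^ d * g s) hψ.tendsto f'_analytic (by fun_prop) hj.symm
  refine .of_isLift hψ (pullback.congr (.of_forall fun p => ?_))
  simp only [ψ, weightedForm_monomial_mul, f']
  ring

lemma isUniformizable_of_tendsto_inv_div {z : X → ℝ × (Fin m → ℝ)} (hz : Tendsto z 𝓤 (𝓝 0))
    (hz0 : ∀ i, ∀ᶠ x in 𝓤, Fin.consEquivL ℝ (fun _ => ℝ) (z x) i ≠ 0)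
    {g : (Fin m → ℝ) → ℝ} (hg : IsNormalCrossing g) (ha : ∀ i, AnalyticAt ℝ (a i) 0)
    (hu : AnalyticAt ℝ u 0) (hu0 : u 0 ≠ 0)
    (hα : Tendsto (fun x => monomial α (z x).2 / (z x).1) 𝓤 (𝓝 0)) :
    IsUniformizable 𝓤 (m + 1) z fun p => weightedForm d α a u p * g p.2 := by
  set e := Fin.consEquivL ℝ fun _ : Fin (m + 1) => ℝ
  have he : IsLift 𝓤 (fun v => e.symm v) z fun x => e (z x) := .of_equiv e.symm hz
  obtain ⟨φ, w, r, hφ, coords, hr, hr0, dvd⟩ := exists_isLift_coord_dvd_monomial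
    (α := Fin.cons 0 α) (k := 0) rfl he.tendsto hz0 (by
      simp only [monomial_cons_zero]
      exact hα)
  have hψ := he.comp hφ
  refine ⟨_, w, hψ, Or.inr ?_⟩
  have pow_crossing : IsNormalCrossing fun v => (e.symm (φ v)).1 ^ d := (coords 0).pow d
  have g_crossing : IsNormalCrossing fun v => g (e.symm (φ v)).2 :=
    hg.comp (analyticAt_snd.fun_comp_of_eq hψ.analyticAt hψ.map_zero) (by rw [hψ.map_zero]; rfl)
      fun i => coords i.succ
  have unit_analytic : AnalyticAt ℝ (fun v => ∑ i ∈ Finset.range (d - 1),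
      a i (e.symm (φ v)).2 * r v ^ (d - i) + u (e.symm (φ v))) 0 := by
    have ha' (i : ℕ) : AnalyticAt ℝ (fun v => a i (e.symm (φ v)).2) 0 :=
      hψ.analyticAt_comp ((ha i).fun_comp_of_eq analyticAt_snd rfl)
    exact (Finset.analyticAt_fun_sum _ fun i _ => (ha' i).mul (hr.pow _)).add
      (hψ.analyticAt_comp hu)
  refine ((pow_crossing.mul (.of_ne_zero unit_analytic ?_)).mul g_crossing).congr
    (.of_forall fun v => ?_)
  · rw [Finset.sum_eq_zero, zero_add, hψ.map_zero]
    · exact hu0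
    · intro i hi
      have := Finset.mem_range.1 hi
      rw [hr0, zero_pow (by omega), mul_zero]
  · have dvd' : monomial α (e.symm (φ v)).2 = (e.symm (φ v)).1 * r v :=
      (monomial_cons_zero α _).symm.trans (dvd v)
    simp only [weightedForm_of_monomial_eq_mul dvd']

lemma HasUniformization.isUniformizable_weightedForm (hU : HasUniformization 𝓤 m)
    (ih : ∀ j < d, HasUniformizationOfOrder 𝓤 m j) {z : X → ℝ × (Fin m → ℝ)}
    (hz : Tendsto z 𝓤 (𝓝 0)) {g : (Fin m → ℝ) → ℝ} (hg : AnalyticAt ℝ g 0)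
    (g_crossing : IsNormalCrossing g) (ha : ∀ i, AnalyticAt ℝ (a i) 0) (hu : AnalyticAt ℝ u 0)
    (hu0 : u 0 ≠ 0) (hα : α ≠ 0) {i : ℕ} (hi : i < d - 1) (hai : a i 0 ≠ 0) :
    IsUniformizable 𝓤 (m + 1) z fun p => weightedForm d α a u p * g p.2 := by
  set e := Fin.consEquivL ℝ fun _ : Fin (m + 1) => ℝ
  by_cases coord_zero : ∃ i, ∀ᶠ x in 𝓤, e (z x) i = 0
  · obtain ⟨i, hi⟩ := coord_zero
    have he : IsLift 𝓤 (fun v => e.symm v) z fun x => e (z x) := .of_equiv e.symm hz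
    have product_analytic : AnalyticAt ℝ (fun p => weightedForm d α a u p * g p.2) 0 :=
      (analyticAt_weightedForm ha hu).mul (hg.fun_comp_of_eq analyticAt_snd rfl)
    exact .of_isLift he (hU.isUniformizable_of_coord_eq_zero he.tendsto hi
      (he.analyticAt_comp product_analytic))
  · have coord_ne (i : Fin (m + 1)) : ∀ᶠ x in 𝓤, e (z x) i ≠ 0 :=
      Ultrafilter.eventually_not.2 (not_exists.1 coord_zero i)
    rcases tendsto_or_tendsto_inv 𝓤 fun x => (z x).1 / monomial α (z x).2 with ⟨c, hc⟩ | hc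
    · have monomial_ne : ∀ᶠ x in 𝓤, monomial α (z x).2 ≠ 0 := by
        filter_upwards [eventually_all.2 coord_ne] with x hx
        exact monomial_ne_zero α fun i => hx i.succ
      exact isUniformizable_of_tendsto_div ih hz hg ha hu hα hi hai monomial_ne hc
    · simp only [inv_div] at hc
      exact isUniformizable_of_tendsto_inv_div hz coord_ne g_crossing ha hu hu0 hc

end OrderReduction

section LocalUniformization

variable {X ι κ : Type*} [Fintype ι] {𝓤 : Ultrafilter X}

lemma exists_isLift_mul_pow {D : ℕ} (hD : D ≠ 0) {t : X → ι → ℝ} (ht : Tendsto t 𝓤 (𝓝 0)) :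
    ∃ (ε : ι → ℝ) (s : X → ι → ℝ), (∀ k, ε k ≠ 0) ∧
      IsLift 𝓤 (fun s k => ε k * s k ^ D) t s := by
  classical
  have exists_sign (k : ι) : ∃ ε : ℝ, ε ≠ 0 ∧ ∀ᶠ x in 𝓤, t x k = ε * |t x k| := by
    rcases 𝓤.em fun x => 0 ≤ t x k with nonneg | neg
    · exact ⟨1, one_ne_zero, nonneg.mono fun x hx => by rw [abs_of_nonneg hx, one_mul]⟩
    · exact ⟨-1, by norm_num, neg.mono fun x hx => by rw [abs_of_neg (not_le.1 hx)]; ring⟩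
  choose ε hε hεt using exists_sign
  refine ⟨ε, fun x k => |t x k| ^ (D : ℝ)⁻¹, hε, ?_, ?_, ?_, ?_⟩
  · refine tendsto_pi_nhds.2 fun k => ?_
    have root_pos : (0 : ℝ) < (D : ℝ)⁻¹ := by positivity
    simpa [Real.zero_rpow root_pos.ne'] using
      (tendsto_pi_nhds.1 ht k).abs.rpow_const (Or.inr root_pos.le)
  · exact analyticAt_pi_iff.2 fun k => by fun_prop
  · simp [hD, Pi.zero_def]
  · filter_upwards [eventually_all.2 hεt] with x hx
    ext k
    rw [Real.rpow_inv_natCast_pow (abs_nonneg _) hD]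
    exact hx k

lemma monomial_mul_pow (β : ι → ℕ) (ε s : ι → ℝ) (D : ℕ) :
    monomial β (fun k => ε k * s k ^ D) = monomial β ε * monomial (D • β) s := by
  simp [monomial, mul_pow, Finset.prod_mul_distrib, pow_mul]

lemma exists_dominant_normalCrossing {S : Finset κ} {e : κ → ℕ} {a : κ → (ι → ℝ) → ℝ}
    (he : ∀ i ∈ S, e i ≠ 0) (ha : ∀ i ∈ S, IsZeroOrNormalCrossing (a i))
    (diff : ∀ i ∈ S, ∀ j ∈ S, IsZeroOrNormalCrossing fun v => a i v ^ e i - a j v ^ e j)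
    (nonzero : ∃ i ∈ S, ¬ ∀ᶠ v in 𝓝 0, a i v = 0) :
    ∃ (b : κ → ι → ℕ) (w : κ → (ι → ℝ) → ℝ), (∀ i, AnalyticAt ℝ (w i) 0) ∧
      (∀ i ∈ S, ∀ᶠ v in 𝓝 0, a i v = monomial (b i) v * w i v) ∧
      ∃ k ∈ S, w k 0 ≠ 0 ∧ ∀ i ∈ S, e k • b k ≤ e i • b i := by
  classical
  set I := S.filter fun i => IsNormalCrossing (a i)
  have mem_I {i : κ} : i ∈ I ↔ i ∈ S ∧ IsNormalCrossing (a i) := Finset.mem_filter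
  have I_nonempty : I.Nonempty := by
    obtain ⟨i, hi, hai⟩ := nonzero
    exact ⟨i, mem_I.2 ⟨hi, (ha i hi).resolve_left hai⟩⟩
  choose! b w hw hw0 hbw using fun i (hi : i ∈ I) => (mem_I.1 hi).2
  obtain ⟨k, hk, minimal⟩ := I.exists_minimalFor (fun i => e i • b i) I_nonempty
  have dominant (i : κ) (hi : i ∈ I) : e k • b k ≤ e i • b i := by
    refine (IsZeroOrNormalCrossing.le_or_le ((hw k hk).pow (e k)) ((hw i hi).pow (e i)).neg
      (pow_ne_zero _ (hw0 k hk)) (neg_ne_zero.2 (pow_ne_zero _ (hw0 i hi))) ?_).elim _root_.id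
        (minimal hi)
    refine (diff k (mem_I.1 hk).1 i (mem_I.1 hi).1).congr ?_
    filter_upwards [hbw k hk, hbw i hi] with v h₁ h₂
    simp only [h₁, h₂, mul_pow, monomial_smul, Pi.neg_apply, Pi.pow_apply, mul_neg, sub_eq_add_neg]
  refine ⟨I.piecewise b fun _ => e k • b k, I.piecewise w fun _ _ => 0, fun i => ?_, fun i hi => ?_,
    k, (mem_I.1 hk).1, by simpa [hk] using hw0 k hk, fun i hi => ?_⟩
  · by_cases hiI : i ∈ I
    · simpa [hiI] using hw i hiI
    · simpa [hiI] using analyticAt_const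
  · by_cases hiI : i ∈ I
    · simpa [hiI] using hbw i hiI
    · simpa [hiI] using (ha i hi).resolve_right fun h => hiI (mem_I.2 ⟨hi, h⟩)
  · by_cases hiI : i ∈ I
    · simpa [hiI, hk] using dominant i hiI
    · simp only [Finset.piecewise_eq_of_mem _ _ _ hk, Finset.piecewise_eq_of_notMem _ _ _ hiI]
      exact fun j => Nat.le_mul_of_pos_left _ (Nat.pos_of_ne_zero (he i hi))

/-- Pulling back along `t k = ε k * s k ^ D` multiplies exponents by `D = δ i * e i`, so that the
least of the monomials in the `a i ^ e i` becomes a `D`-th power `m ^ D`, and `m ^ δ i` divides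
`a i`. -/
lemma exists_isLift_eq_monomial_pow_mul {S : Finset κ} {δ e : κ → ℕ} {D : ℕ} (hD : D ≠ 0)
    (hδ : ∀ i ∈ S, δ i * e i = D) {a : κ → (ι → ℝ) → ℝ}
    (ha : ∀ i ∈ S, IsZeroOrNormalCrossing (a i)) (ha0 : ∀ i ∈ S, a i 0 = 0)
    (diff : ∀ i ∈ S, ∀ j ∈ S, IsZeroOrNormalCrossing fun v => a i v ^ e i - a j v ^ e j)
    (nonzero : ∃ i ∈ S, ¬ ∀ᶠ v in 𝓝 0, a i v = 0) {t : X → ι → ℝ} (ht : Tendsto t 𝓤 (𝓝 0)) :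
    ∃ (σ : (ι → ℝ) → ι → ℝ) (s : X → ι → ℝ) (α : ι → ℕ) (a' : κ → (ι → ℝ) → ℝ),
      IsLift 𝓤 σ t s ∧ (∀ k, IsNormalCrossing fun v => σ v k) ∧ α ≠ 0 ∧
      (∀ i, AnalyticAt ℝ (a' i) 0) ∧ (∃ i ∈ S, a' i 0 ≠ 0) ∧
      ∀ i ∈ S, ∀ᶠ v in 𝓝 0, a i (σ v) = monomial α v ^ δ i * a' i v := by
  have he (i : κ) (hi : i ∈ S) : e i ≠ 0 := right_ne_zero_of_mul ((hδ i hi).trans_ne hD)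
  obtain ⟨b, w, hw, hbw, k, hk, hwk, dominant⟩ := exists_dominant_normalCrossing he ha diff nonzero
  obtain ⟨ε, s, hε, hσ⟩ := exists_isLift_mul_pow hD ht
  set σ : (ι → ℝ) → ι → ℝ := fun s k => ε k * s k ^ D
  have hbk : b k ≠ 0 := fun hbk => hwk <| by
    simpa [hbk, ha0 k hk] using (hbw k hk).self_of_nhds.symm
  have quotient_add (i : κ) (hi : i ∈ S) :
      D • b i = δ i • e k • b k + (D • b i - δ i • e k • b k) := by
    refine (add_tsub_cancel_of_le ?_).symm
    rw [← hδ i hi, mul_smul]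
    exact nsmul_le_nsmul_right (dominant i hi) _
  refine ⟨σ, s, e k • b k,
    fun i v => monomial (b i) ε * monomial (D • b i - δ i • e k • b k) v * w i (σ v), hσ,
    fun j => ?_, smul_ne_zero (he k hk) hbk, fun i => ?_, ⟨k, hk, ?_⟩, fun i hi => ?_⟩
  · exact .mul (.of_ne_zero analyticAt_const (hε j)) ((IsNormalCrossing.coord j).pow D)
  · exact AnalyticAt.mul (by fun_prop) (hσ.analyticAt_comp (hw i))
  · have quotient_zero : D • b k - δ k • e k • b k = 0 := by rw [← mul_smul, hδ k hk, tsub_self]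
    simpa [hσ.map_zero, quotient_zero, hwk, -nsmul_eq_mul] using monomial_ne_zero (b k) hε
  · filter_upwards [hσ.tendsto_chart.eventually (hbw i hi)] with v hv
    rw [hv, monomial_mul_pow, quotient_add i hi, monomial_add, monomial_smul (δ i)]
    simp only [add_tsub_cancel_left]
    ring

section Induction

variable {m d : ℕ} {a : ℕ → (Fin m → ℝ) → ℝ} {u : ℝ × (Fin m → ℝ) → ℝ} {g : (Fin m → ℝ) → ℝ}
  {z : X → ℝ × (Fin m → ℝ)}

lemma IsUniformizable.of_cons {f : ℝ × (Fin m → ℝ) → ℝ} (hz : Tendsto z 𝓤 (𝓝 0))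
    (hf : IsZeroOrNormalCrossing fun v : Fin (m + 1) → ℝ => f (v 0, Fin.tail v)) :
    IsUniformizable 𝓤 (m + 1) z f :=
  ⟨_, _, .of_equiv (Fin.consEquivL ℝ fun _ : Fin (m + 1) => ℝ).symm hz, hf⟩

lemma HasUniformization.isUniformizable_of_coeff_ne_zero (hU : HasUniformization 𝓤 m)
    (ih : ∀ j < d, HasUniformizationOfOrder 𝓤 m j) (hz : Tendsto z 𝓤 (𝓝 0))
    (hg : AnalyticAt ℝ g 0) (g_crossing : IsNormalCrossing g) (hu : AnalyticAt ℝ u 0)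
    (hu0 : u 0 ≠ 0) (ha : ∀ i < d - 1, IsZeroOrNormalCrossing (a i))
    (ha0 : ∀ i < d - 1, a i 0 = 0)
    (diff : ∀ i < d - 1, ∀ j < d - 1, IsZeroOrNormalCrossing fun v =>
      a i v ^ (d.factorial / (d - i)) - a j v ^ (d.factorial / (d - j)))
    (nonzero : ∃ i < d - 1, ¬ ∀ᶠ v in 𝓝 0, a i v = 0) :
    IsUniformizable 𝓤 (m + 1) z fun p =>
      (∑ i ∈ Finset.range (d - 1), a i p.2 * p.1 ^ i + p.1 ^ d * u p) * g p.2 := by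
  simp only [← Finset.mem_range] at ha ha0 diff nonzero
  have weights (i : ℕ) (hi : i ∈ Finset.range (d - 1)) :
      (d - i) * (d.factorial / (d - i)) = d.factorial :=
    Nat.mul_div_cancel' (Nat.dvd_factorial (by grind) (by omega))
  obtain ⟨σ, s, α, a', hσ, coords, hα, ha', ⟨i, hi, hai⟩, haa'⟩ :=
    exists_isLift_eq_monomial_pow_mul d.factorial_ne_zero weights ha ha0 diff nonzero
      hz.snd_nhds
  have lift := hσ.prodMk_fst hz.fst_nhds
  have reduced : IsUniformizable 𝓤 (m + 1) _ fun p =>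
      weightedForm d α a' (fun p => u (p.1, σ p.2)) p * g (σ p.2) :=
    hU.isUniformizable_weightedForm ih lift.tendsto (hσ.analyticAt_comp hg)
      (g_crossing.comp hσ.analyticAt hσ.map_zero coords) ha' (lift.analyticAt_comp hu)
      (by rwa [lift.map_zero]) hα (Finset.mem_range.1 hi) hai
  refine .of_isLift lift (reduced.congr ?_)
  filter_upwards [(continuous_snd.tendsto' (0 : ℝ × (Fin m → ℝ)) 0 rfl).eventually
    ((Filter.eventually_all_finset _).2 haa')] with p hp
  rw [weightedForm, Finset.sum_congr rfl fun i hi => by rw [← hp i hi]]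

lemma HasUniformization.isUniformizable_of_isZeroOrNormalCrossing (hU : HasUniformization 𝓤 m)
    (ih : ∀ j < d, HasUniformizationOfOrder 𝓤 m j) (hz : Tendsto z 𝓤 (𝓝 0))
    (hg : AnalyticAt ℝ g 0) (g_crossing : IsZeroOrNormalCrossing g) (hu : AnalyticAt ℝ u 0)
    (hu0 : u 0 ≠ 0) (ha : ∀ i < d - 1, IsZeroOrNormalCrossing (a i))
    (ha0 : ∀ i < d - 1, a i 0 = 0)
    (diff : ∀ i < d - 1, ∀ j < d - 1, IsZeroOrNormalCrossing fun v =>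
      a i v ^ (d.factorial / (d - i)) - a j v ^ (d.factorial / (d - j))) :
    IsUniformizable 𝓤 (m + 1) z fun p =>
      (∑ i ∈ Finset.range (d - 1), a i p.2 * p.1 ^ i + p.1 ^ d * u p) * g p.2 := by
  have tail_tendsto : Tendsto (fun v : Fin (m + 1) → ℝ => Fin.tail v) (𝓝 0) (𝓝 0) :=
    Continuous.tendsto' (by fun_prop) _ _ rfl
  rcases g_crossing with g_zero | g_crossing
  · refine .of_cons hz (Or.inl ?_)
    filter_upwards [tail_tendsto.eventually g_zero] with v hv
    rw [hv, mul_zero]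
  by_cases zero : ∀ i < d - 1, ∀ᶠ v in 𝓝 0, a i v = 0
  · have unit_analytic : AnalyticAt ℝ (fun v : Fin (m + 1) → ℝ => u (v 0, Fin.tail v)) 0 :=
      hu.fun_comp_of_eq ((Fin.consEquivL ℝ fun _ : Fin (m + 1) => ℝ).symm.analyticAt 0) rfl
    refine .of_cons hz (Or.inr (((((IsNormalCrossing.coord 0).pow d).mul
      (.of_ne_zero unit_analytic hu0)).mul g_crossing.comp_tail).congr ?_))
    simp only [← Finset.mem_range] at zero
    filter_upwards [tail_tendsto.eventually ((Filter.eventually_all_finset _).2 zero)] with v hv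
    rw [Finset.sum_eq_zero fun i hi => by rw [hv i hi, zero_mul], zero_add]
  · push Not at zero
    exact hU.isUniformizable_of_coeff_ne_zero ih hz hg g_crossing hu hu0 ha ha0 diff
      (by simpa using zero)

lemma HasUniformization.isUniformizable_sum_add (hU : HasUniformization 𝓤 m)
    (ih : ∀ j < d, HasUniformizationOfOrder 𝓤 m j) (hz : Tendsto z 𝓤 (𝓝 0))
    (hg : AnalyticAt ℝ g 0) (ha : ∀ i, AnalyticAt ℝ (a i) 0) (ha0 : ∀ i < d - 1, a i 0 = 0)
    (hu : AnalyticAt ℝ u 0) (hu0 : u 0 ≠ 0) :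
    IsUniformizable 𝓤 (m + 1) z fun p =>
      (∑ i ∈ Finset.range (d - 1), a i p.2 * p.1 ^ i + p.1 ^ d * u p) * g p.2 := by
  classical
  set I := Finset.range (d - 1)
  set diff : ℕ × ℕ → (Fin m → ℝ) → ℝ := fun ij v =>
    a ij.1 v ^ (d.factorial / (d - ij.1)) - a ij.2 v ^ (d.factorial / (d - ij.2))
  set S : Finset ((Fin m → ℝ) → ℝ) := insert g (I.image a ∪ (I ×ˢ I).image diff)
  have S_analytic : ∀ f ∈ S, AnalyticAt ℝ f 0 := by
    simp only [S, Finset.forall_mem_insert, Finset.mem_union, Finset.mem_image]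
    refine ⟨hg, ?_⟩
    rintro f (⟨i, -, rfl⟩ | ⟨⟨i, j⟩, -, rfl⟩)
    · exact ha i
    · exact ((ha i).pow _).sub ((ha j).pow _)
  obtain ⟨φ, w, hφ, crossing⟩ := hU.exists_isLift_finset S (g := fun f => f)
    hz.snd_nhds S_analytic
  have lift := hφ.prodMk_fst hz.fst_nhds
  refine .of_isLift lift (hU.isUniformizable_of_isZeroOrNormalCrossing (g := fun v => g (φ v))
    (a := fun i v => a i (φ v)) (u := fun p => u (p.1, φ p.2)) ih lift.tendsto
    (hφ.analyticAt_comp hg) (crossing g (by simp [S])) (lift.analyticAt_comp hu)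
    (by rwa [lift.map_zero]) (fun i hi => crossing (a i) ?_)
    (fun i hi => by rw [hφ.map_zero, ha0 i hi]) fun i hi j hj => crossing (diff (i, j)) ?_)
  · exact Finset.mem_insert_of_mem (Finset.mem_union_left _
      (Finset.mem_image_of_mem a (Finset.mem_range.2 hi)))
  · exact Finset.mem_insert_of_mem (Finset.mem_union_right _ (Finset.mem_image_of_mem diff
      (Finset.mk_mem_product (Finset.mem_range.2 hi) (Finset.mem_range.2 hj))))

theorem HasUniformization.hasUniformizationOfOrder (hU : HasUniformization 𝓤 m) (d : ℕ) :
    HasUniformizationOfOrder 𝓤 m d := by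
  induction d using Nat.strong_induction_on with
  | _ d ih =>
    intro z f g hz hf hg order
    obtain ⟨h, a, u, hh, hh0, ha, ha0, hu, hu0, tschirnhausen⟩ := exists_tschirnhausen hf order
    have shear : IsLift 𝓤 (fun p => (p.1 + h p.2, p.2)) z
        fun x => ((z x).1 - h (z x).2, (z x).2) :=
      { tendsto := by
          have h_tendsto : Tendsto h (𝓝 0) (𝓝 0) := hh0 ▸ hh.continuousAt.tendsto
          simpa only [Prod.fst_zero, Prod.snd_zero, sub_zero, Prod.mk_zero_zero,
            Function.comp_apply] using
              (hz.fst_nhds.sub (h_tendsto.comp hz.snd_nhds)).prodMk_nhds hz.snd_nhds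
        analyticAt :=
          (analyticAt_fst.add (hh.fun_comp_of_eq analyticAt_snd rfl)).prod analyticAt_snd
        map_zero := by simp [hh0]
        eventually_eq := by simp }
    refine .of_isLift shear ((hU.isUniformizable_sum_add ih shear.tendsto hg ha
      (fun i hi => ha0 i (by omega)) hu hu0).congr ?_)
    filter_upwards [tschirnhausen] with p hp
    rw [hp]

lemma exists_continuousLinearEquiv_analyticOrderAt_ne_top {g : (Fin (m + 1) → ℝ) → ℝ}
    (hg : AnalyticAt ℝ g 0) (hg0 : g 0 = 0) (g_ne : ¬ ∀ᶠ v in 𝓝 0, g v = 0) :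
    ∃ L : (ℝ × (Fin m → ℝ)) ≃L[ℝ] (Fin (m + 1) → ℝ),
      analyticOrderAt (fun s : ℝ => g (L (s, 0))) 0 ≠ ⊤ := by
  obtain ⟨w, hw⟩ := exists_analyticOrderAt_ray_ne_top hg g_ne
  have w_ne : w ≠ 0 := by
    rintro rfl
    exact hw (analyticOrderAt_eq_top.2 (by simp [hg0]))
  obtain ⟨L, hL⟩ := SeparatingDual.exists_continuousLinearEquiv_apply_eq (R := ℝ)
    (x := Fin.consEquivL ℝ (fun _ : Fin (m + 1) => ℝ) (1, 0)) (by simp) w_ne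
  refine ⟨(Fin.consEquivL ℝ fun _ => ℝ).trans L, ?_⟩
  have ray (s : ℝ) : (Fin.consEquivL ℝ fun _ => ℝ).trans L (s, 0) = s • w := by
    rw [← hL, ← map_smul L, ← map_smul (Fin.consEquivL ℝ _)]
    simp
  simpa only [ray] using hw

theorem hasUniformization (𝓤 : Ultrafilter X) (m : ℕ) : HasUniformization 𝓤 m := by
  induction m with
  | zero =>
    intro z g hz hg
    refine ⟨_, _, .id hz, ?_⟩
    rcases eq_or_ne (g 0) 0 with hg0 | hg0
    · exact Or.inl (.of_forall fun v => Subsingleton.elim v 0 ▸ hg0)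
    · exact Or.inr (.of_ne_zero hg hg0)
  | succ m ih =>
    intro z g hz hg
    by_cases zero : ∀ᶠ v in 𝓝 0, g v = 0
    · exact ⟨_, _, .id hz, Or.inl zero⟩
    rcases eq_or_ne (g 0) 0 with hg0 | hg0
    · obtain ⟨L, hL⟩ := exists_continuousLinearEquiv_analyticOrderAt_ne_top hg hg0 zero
      obtain ⟨d, hd⟩ := ENat.ne_top_iff_exists.1 hL
      have lift := IsLift.of_equiv L hz
      refine .of_isLift lift ?_
      simpa using ih.hasUniformizationOfOrder d _ _ (fun _ => 1) lift.tendsto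
        (lift.analyticAt_comp hg) analyticAt_const hd.symm
    · exact ⟨_, _, .id hz, Or.inr (.of_ne_zero hg hg0)⟩

end Induction

end LocalUniformization

section GradientInequality

variable {E F : Type*} [NormedAddCommGroup E] [NormedSpace ℝ E] [NormedAddCommGroup F]
  [NormedSpace ℝ F]

section NormalCrossing

variable {ι : Type*} [Fintype ι] [DecidableEq ι]

lemma fderiv_monomial_single (α : ι → ℕ) (v : ι → ℝ) (i : ι) :
    fderiv ℝ (monomial α) v (Pi.single i (v i)) = α i * monomial α v := by
  have product := HasFDerivAt.finsetProd (u := Finset.univ) fun j _ =>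
    (hasDerivAt_pow (α j) (v j)).comp_hasFDerivAt v
      (hasFDerivAt_apply (𝕜 := ℝ) (F' := fun _ : ι => ℝ) j v)
  change HasFDerivAt (monomial α) _ v at product
  rw [product.fderiv, _root_.sum_apply, Finset.sum_eq_single i]
  · rw [monomial, ← Finset.prod_erase_mul _ _ (Finset.mem_univ i)]
    rcases Nat.eq_zero_or_pos (α i) with hi | hi
    · simp [hi]
    · simp [← pow_sub_one_mul hi.ne' (v i)]
      ring
  · intro j _ hj
    simp [hj]
  · simp

lemma IsNormalCrossing.exists_isBigO_fderiv_single {g : (ι → ℝ) → ℝ} (hg : IsNormalCrossing g)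
    (hg0 : g 0 = 0) :
    ∃ i, g =O[𝓝 0] fun v => fderiv ℝ g v (Pi.single i (v i)) := by
  obtain ⟨α, u, hu, hu0, hgu⟩ := hg
  have α_ne : α ≠ 0 := by
    rintro rfl
    exact hu0 (by simpa [hg0] using hgu.self_of_nhds.symm)
  obtain ⟨i, hi⟩ := Function.ne_iff.1 α_ne
  refine ⟨i, ?_⟩
  set r : (ι → ℝ) → ℝ := fun v => α i * u v + fderiv ℝ u v (Pi.single i (v i))
  have r_analytic : ContinuousAt r 0 :=
    (hu.continuousAt.const_mul _).add (hu.fderiv.continuousAt.clm_apply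
      ((continuous_single i).comp (continuous_apply i)).continuousAt)
  have r_ne : r 0 ≠ 0 := by simpa [r] using ⟨hi, hu0⟩
  have u_isBigO : u =O[𝓝 0] r :=
    isBigO_of_div_tendsto_nhds ((r_analytic.eventually_ne r_ne).mono fun v hv h => absurd h hv) _
      (hu.continuousAt.div r_analytic r_ne)
  refine ((isBigO_refl (monomial α) _).mul u_isBigO).congr' (hgu.mono fun v hv => hv.symm) ?_
  filter_upwards [hgu.eventually_nhds, hu.eventually_analyticAt] with v h₁ h₂
  rw [Filter.EventuallyEq.fderiv_eq h₁,
    fderiv_fun_mul (analyticAt_monomial α v).differentiableAt h₂.differentiableAt]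
  simp only [_root_.add_apply, _root_.smul_apply, smul_eq_mul,
    fderiv_monomial_single, r]
  ring

end NormalCrossing

lemma IsNormalCrossing.comp_isLittleO_fderiv [CompleteSpace E] {m : ℕ} {f : E → ℝ}
    {ψ : (Fin m → ℝ) → E} (hf : AnalyticAt ℝ f (ψ 0)) (hψ : AnalyticAt ℝ ψ 0) (hf0 : f (ψ 0) = 0)
    (crossing : IsNormalCrossing fun v => f (ψ v)) :
    (fun v => f (ψ v)) =o[𝓝 0] fun v => fderiv ℝ f (ψ v) := by
  obtain ⟨i, hi⟩ := crossing.exists_isBigO_fderiv_single hf0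
  set e : (Fin m → ℝ) → E := fun v => fderiv ℝ ψ v (Pi.single i (v i))
  have e_continuous : ContinuousAt e 0 := hψ.fderiv.continuousAt.clm_apply
    ((continuous_single i).comp (continuous_apply i)).continuousAt
  have e_isLittleO : e =o[𝓝 0] fun _ => (1 : ℝ) :=
    (isLittleO_one_iff ℝ).2 (by simpa [e] using e_continuous.tendsto)
  have apply_isLittleO : (fun v => fderiv ℝ f (ψ v) (e v)) =o[𝓝 0] fun v => fderiv ℝ f (ψ v) := by
    have apply_isBigO : (fun v => fderiv ℝ f (ψ v) (e v)) =O[𝓝 0]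
        fun v => ‖fderiv ℝ f (ψ v)‖ * ‖e v‖ :=
      .of_norm_le fun v => (fderiv ℝ f (ψ v)).le_opNorm (e v)
    refine apply_isBigO.trans_isLittleO (.of_norm_right ?_)
    simpa using (isBigO_refl (fun v => ‖fderiv ℝ f (ψ v)‖) _).mul_isLittleO e_isLittleO.norm_left
  refine (hi.congr' .rfl ?_).trans_isLittleO apply_isLittleO
  filter_upwards [hψ.eventually_analyticAt, hψ.continuousAt.eventually hf.eventually_analyticAt]
    with v h₁ h₂
  rw [fderiv_fun_comp v h₂.differentiableAt h₁.differentiableAt]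
  rfl

variable [FiniteDimensional ℝ E]

lemma isLittleO_fderiv_of_real {f : E → ℝ} {x₀ : E} (hf : AnalyticAt ℝ f x₀) (hf0 : f x₀ = 0) :
    f =o[𝓝 x₀] fderiv ℝ f := by
  let L : E ≃L[ℝ] (Fin (Module.finrank ℝ E) → ℝ) := .ofFinrankEq (by simp)
  refine isLittleO_iff.2 fun c hc => Filter.mem_iff_ultrafilter.2 fun 𝓤 h𝓤 => ?_
  have chart_analytic : AnalyticAt ℝ (fun v => x₀ + L.symm v) 0 :=
    analyticAt_const.add (L.symm.analyticAt 0)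
  have z_tendsto : Tendsto (fun x => L (x - x₀)) 𝓤 (𝓝 0) :=
    (Continuous.tendsto' (by fun_prop) x₀ 0 (by simp)).mono_left h𝓤
  obtain ⟨φ, w, hφ, crossing⟩ := hasUniformization 𝓤 _ _ (fun v => f (x₀ + L.symm v)) z_tendsto
    (hf.fun_comp_of_eq chart_analytic (by simp))
  set ψ : (Fin (Module.finrank ℝ E) → ℝ) → E := fun v => x₀ + L.symm (φ v)
  have hψ0 : ψ 0 = x₀ := by simp [ψ, hφ.map_zero]
  have pullback : (fun v => f (ψ v)) =o[𝓝 0] fun v => fderiv ℝ f (ψ v) := by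
    rcases crossing with zero | crossing
    · exact (isLittleO_zero _ _).congr' (zero.mono fun v hv => hv.symm) .rfl
    · exact crossing.comp_isLittleO_fderiv (hψ0 ▸ hf)
        (chart_analytic.fun_comp_of_eq hφ.analyticAt hφ.map_zero) (hψ0 ▸ hf0)
  filter_upwards [hφ.eventually_eq, hφ.tendsto.eventually (pullback.bound hc)] with x h₁ h₂
  have hψx : ψ (w x) = x := by simp [ψ, ← h₁]
  rwa [hψx] at h₂

variable [FiniteDimensional ℝ F]

theorem isLittleO_fderiv {f : E → F} {x₀ : E} (hf : AnalyticAt ℝ f x₀) (hf0 : f x₀ = 0) :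
    f =o[𝓝 x₀] fderiv ℝ f := by
  let L : F ≃L[ℝ] (Fin (Module.finrank ℝ F) → ℝ) := .ofFinrankEq (by simp)
  refine (L.isBigO_comp_rev f _).trans_isLittleO (isLittleO_pi.2 fun i => ?_)
  let ℓ : F →L[ℝ] ℝ := (ContinuousLinearMap.proj i).comp (L : F →L[ℝ] (Fin _ → ℝ))
  refine (isLittleO_fderiv_of_real ((ℓ.analyticAt _).fun_comp hf)
    (by simp [hf0])).trans_isBigO (.of_bound ‖ℓ‖ ?_)
  filter_upwards [hf.eventually_analyticAt] with x hx
  rw [show fderiv ℝ (fun x => ℓ (f x)) x = ℓ.comp (fderiv ℝ f x) from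
    (ℓ.hasFDerivAt.comp x hx.differentiableAt.hasFDerivAt).fderiv]
  exact ℓ.opNorm_comp_le _

end GradientInequality

end Lojasiewicz

theorem lojasiewicz_gradient_hessian_general {E F : Type*}
    [NormedAddCommGroup E] [NormedSpace ℝ E] [FiniteDimensional ℝ E]
    [NormedAddCommGroup F] [NormedSpace ℝ F] [FiniteDimensional ℝ F]
    {γ : E → F} {y₀ : E} (hγ : AnalyticAt ℝ γ y₀)
    (h0 : γ y₀ = 0) (h1 : fderiv ℝ γ y₀ = 0) {C₁ C₂ : ℝ} (hC₁ : 0 < C₁) (hC₂ : 0 < C₂) :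
    ∀ᶠ y in 𝓝 y₀, ‖γ y‖ ≤ C₁ * ‖fderiv ℝ γ y‖ ∧
      ‖fderiv ℝ γ y‖ ≤ C₂ * ‖iteratedFDeriv ℝ 2 γ y‖ ∧
      ‖γ y‖ ≤ C₁ * C₂ * ‖iteratedFDeriv ℝ 2 γ y‖ := by
  filter_upwards [(Lojasiewicz.isLittleO_fderiv hγ h0).bound hC₁,
    (Lojasiewicz.isLittleO_fderiv hγ.fderiv h1).bound hC₂] with y gradient hessian
  rw [← norm_iteratedFDeriv_one (f := fderiv ℝ γ), norm_iteratedFDeriv_fderiv] at hessian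
  refine ⟨gradient, hessian, gradient.trans ?_⟩
  rw [mul_assoc]
  gcongr

/-- consequence of the Łojasiewicz inequality. Let `U ⊆ ℝ^{d-1}` be
open and `γ : U → ℝ` real-analytic with `γ(y₀) = 0` and `∇γ(y₀) = 0` at some `y₀ ∈ U`.
Then there are a neighborhood `V` of `y₀` and constants `C₁, C₂ > 0` with
`|γ(y)| ≤ C₁ |∇γ(y)|` and `|∇γ(y)| ≤ C₂ |D²γ(y)|` on `V`; in particular
`|γ(y)| ≤ C₁C₂ |D²γ(y)|` on `V`. -/
theorem lojasiewicz_gradient_hessian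
    (n : ℕ) (U : Set (EuclideanSpace ℝ (Fin n))) (hU : IsOpen U)
    (γ : EuclideanSpace ℝ (Fin n) → ℝ) (hγ : AnalyticOnNhd ℝ γ U)
    (y₀ : EuclideanSpace ℝ (Fin n)) (hy₀ : y₀ ∈ U)
    (h0 : γ y₀ = 0) (h1 : fderiv ℝ γ y₀ = 0) :
    ∃ V ∈ 𝓝 y₀, ∃ C₁ > (0 : ℝ), ∃ C₂ > (0 : ℝ), ∀ y ∈ V,
      |γ y| ≤ C₁ * ‖fderiv ℝ γ y‖ ∧
      ‖fderiv ℝ γ y‖ ≤ C₂ * ‖iteratedFDeriv ℝ 2 γ y‖ ∧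
      |γ y| ≤ C₁ * C₂ * ‖iteratedFDeriv ℝ 2 γ y‖ := by
  exact ⟨_, lojasiewicz_gradient_hessian_general (hγ y₀ hy₀) h0 h1 one_pos one_pos,
    1, one_pos, 1, one_pos, fun _ hy => hy⟩
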